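/- Let m ≥ 2 and λ = (m−2)/2. If f ∈ S(ℝ^m) is a real-valued radial function, f(x) = f₀(|x|), then the Clifford–Fourier transform of f agrees with the Hankel transform of order λ of the radial profile: F_− f(y) = (2π)^{−m/2} ∫_{ℝ^m} K_−(x,y) f(x) dx = ∫₀^∞ f₀(r) (J_λ(r|y|)/(r|y|)^λ) r^{2λ+1} dr. In particular, F_− f coincides with the classical Fourier transform (2π)^{−m/2}∫_{ℝ^m} e^{−i⟨x,y⟩} f(x) dx on radial functions. -/

import Mathlib

open scoped BigOperators
open MeasureTheory

noncomputable section

namespace CliffordFourier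

/-- Concrete model of the complexified Clifford algebra `Cl_{0,m} ⊗ ℂ`:
an element is the family of its complex coefficients on the canonical basis
`e_S = e_{i₁} ⋯ e_{i_k}` (for `S = {i₁ < … < i_k} ⊆ {0,…,m-1}`). -/
def Cl (m : ℕ) : Type := Finset (Fin m) → ℂ

variable {m : ℕ}

instance : NormedAddCommGroup (Cl m) :=
  inferInstanceAs (NormedAddCommGroup (Finset (Fin m) → ℂ))
instance : NormedSpace ℝ (Cl m) :=
  inferInstanceAs (NormedSpace ℝ (Finset (Fin m) → ℂ))
instance : Module ℂ (Cl m) := inferInstanceAs (Module ℂ (Finset (Fin m) → ℂ))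
instance : CompleteSpace (Cl m) := inferInstanceAs (CompleteSpace (Finset (Fin m) → ℂ))

/-- The coefficient of `a` on the basis element `e_S`. -/
def coeff (a : Cl m) : Finset (Fin m) → ℂ := a

/-- Build an element of the Clifford algebra from its coefficients. -/
def ofCoeff (f : Finset (Fin m) → ℂ) : Cl m := f

/-- `1 = e_∅`. -/
instance : One (Cl m) := ⟨ofCoeff fun S => if S = (∅ : Finset (Fin m)) then 1 else 0⟩

/-- Clifford multiplication, determined by the relations `e_i e_j = - e_j e_i` (`i ≠ j`)
and `e_i² = -1`; on basis elements it is given by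
`e_T · e_U = (-1)^{#{(t,u) ∈ T×U : u < t}} · (-1)^{#(T∩U)} · e_{T Δ U}`. -/
instance : Mul (Cl m) :=
  ⟨fun a b => ofCoeff fun S => ∑ T : Finset (Fin m),
    ((-1 : ℂ) ^ ((((T ×ˢ (symmDiff T S)).filter fun p : Fin m × Fin m => p.2 < p.1).card)
        + (T ∩ (symmDiff T S)).card))
      * coeff a T * coeff b (symmDiff T S)⟩

/-- The generator `e_i`. -/
def e (m : ℕ) (i : Fin m) : Cl m := ofCoeff fun S => if S = {i} then 1 else 0

/-- The embedding of a vector `x ∈ ℝ^m` as `x = Σ_i x_i e_i` in the Clifford algebra. -/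
def vec (m : ℕ) (x : Fin m → ℝ) : Cl m := ∑ i : Fin m, (x i : ℂ) • e m i

/-- The Euclidean inner product `⟨x,y⟩ = Σ_i x_i y_i`. -/
def ip (x y : Fin m → ℝ) : ℝ := ∑ i, x i * y i

/-- The Euclidean norm `|x|`. -/
def nrm (x : Fin m → ℝ) : ℝ := Real.sqrt (ip x x)

/-- The wedge product `x∧y = Σ_{j<k} e_j e_k (x_j y_k - x_k y_j)`. -/
def wedge (m : ℕ) (x y : Fin m → ℝ) : Cl m :=
  ∑ j : Fin m, ∑ k : Fin m,
    if j < k then ((x j * y k - x k * y j : ℝ) : ℂ) • (e m j * e m k) else 0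

/-- Complex conjugation of the coefficients. -/
def cconj (a : Cl m) : Cl m := ofCoeff fun S => starRingEnd ℂ (coeff a S)

/-- The Gegenbauer polynomial `C_k^λ(w)`, defined through the standard three-term
recurrence, equivalent to the generating function `(1-2wt+t²)^{-λ} = Σ_k C_k^λ(w) t^k`. -/
def geg (lam : ℝ) : ℕ → ℝ → ℝ
  | 0, _ => 1
  | 1, w => 2 * lam * w
  | (k+2), w => (2 * ((k : ℝ) + 1 + lam) * w * geg lam (k+1) w
      - ((k : ℝ) + 2 * lam) * geg lam k w) / ((k : ℝ) + 2)

/-- The Bessel function of the first kind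
`J_a(z) = Σ_{j≥0} (-1)^j (z/2)^{2j+a} / (j! Γ(j+a+1))`. -/
def besselJ (a z : ℝ) : ℝ :=
  ∑' j : ℕ, ((-1 : ℝ)^j * (z/2) ^ (2*(j:ℝ) + a)) / (j.factorial * Real.Gamma ((j : ℝ) + a + 1))

/-- The entire function `J̃_a(t) = t^{-a} J_a(t) = Σ_{j≥0} (-1)^j (t/2)^{2j} / (j! Γ(j+a+1) 2^a)`
(for `t > 0` this is literally `t^{-a} J_a(t)`). -/
def besselJt (a t : ℝ) : ℝ :=
  ∑' j : ℕ, ((-1 : ℝ)^j * (t/2) ^ (2*j)) / (j.factorial * Real.Gamma ((j : ℝ) + a + 1) * (2:ℝ)^a)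

/-- The renormalized Gegenbauer polynomial `((k+λ)/λ) C_k^λ = C_k^{λ+1} - C_{k-2}^{λ+1}`
(the right-hand side also makes sense for `λ = 0`, i.e. `m = 2`). -/
def gegT (lam : ℝ) (k : ℕ) (w : ℝ) : ℝ :=
  geg (lam + 1) k w - (if 2 ≤ k then geg (lam + 1) (k - 2) w else 0)

/-- `A_λ(w,z) = 2^{λ-1} Γ(λ+1) Σ_{k≥0} (u + (-1)^k) z^{-λ} J_{k+λ}(z) C_k^λ(w)`, where `u = i^m`;
here written using `z^{-λ} J_{k+λ}(z) = z^k J̃_{k+λ}(z)`, which makes the formula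
well defined for all `z ≥ 0` (and all `m ≥ 2`). -/
def AfunR (u : ℂ) (lam w z : ℝ) : ℂ :=
  (((2:ℝ)^(lam - 1) * Real.Gamma (lam + 1) : ℝ) : ℂ) *
    ∑' k : ℕ, (u + (-1 : ℂ)^k) * ((z^k * besselJt ((k : ℝ) + lam) z * geg lam k w : ℝ) : ℂ)

/-- `B_λ(w,z) = -2^{λ-1} Γ(λ) Σ_{k≥0} (k+λ)(u - (-1)^k) z^{-λ} J_{k+λ}(z) C_k^λ(w)`;
here written using `Γ(λ)(k+λ)C_k^λ = Γ(λ+1)(C_k^{λ+1} - C_{k-2}^{λ+1})` and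
`z^{-λ} J_{k+λ}(z) = z^k J̃_{k+λ}(z)`, which makes the formula well defined
for all `z ≥ 0` and all `m ≥ 2` (including `λ = 0`). -/
def BfunR (u : ℂ) (lam w z : ℝ) : ℂ :=
  -(((2:ℝ)^(lam - 1) * Real.Gamma (lam + 1) : ℝ) : ℂ) *
    ∑' k : ℕ, (u - (-1 : ℂ)^k) * ((z^k * besselJt ((k : ℝ) + lam) z * gegT lam k w : ℝ) : ℂ)

/-- `C_λ(w,z) = -2^{λ-1} Γ(λ) Σ_{k≥0} (u + (-1)^k) z^{-λ-1} J_{k+λ}(z) (C_k^λ)'(w)`;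
here written using `Γ(λ) (C_k^λ)' = 2 Γ(λ+1) C_{k-1}^{λ+1}` and
`z^{-λ-1} J_{k+λ}(z) = z^{k-1} J̃_{k+λ}(z)`, which makes the formula well defined
for all `z ≥ 0` and all `m ≥ 2` (including `λ = 0`). -/
def CfunR (u : ℂ) (lam w z : ℝ) : ℂ :=
  -(((2:ℝ)^lam * Real.Gamma (lam + 1) : ℝ) : ℂ) *
    ∑' k : ℕ, (u + (-1 : ℂ)^k) *
      ((z^(k - 1) * besselJt ((k : ℝ) + lam) z
        * (if 1 ≤ k then geg (lam + 1) (k - 1) w else 0) : ℝ) : ℂ)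

/-- The Clifford-Fourier kernel
`K_-(x,y) = A_λ(w,z) + B_λ(w,z) + (x∧y) C_λ(w,z)`
with `λ = (m-2)/2`, `z = |x||y|`, `w = ⟨x,y⟩/(|x||y|)`. -/
def Kminus (m : ℕ) (x y : Fin m → ℝ) : Cl m :=
  (AfunR (Complex.I ^ m) (((m:ℝ) - 2)/2) (ip x y / (nrm x * nrm y)) (nrm x * nrm y)
    + BfunR (Complex.I ^ m) (((m:ℝ) - 2)/2) (ip x y / (nrm x * nrm y)) (nrm x * nrm y)) • (1 : Cl m)
  + CfunR (Complex.I ^ m) (((m:ℝ) - 2)/2) (ip x y / (nrm x * nrm y)) (nrm x * nrm y) • wedge m x y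

/-!
In polar coordinates the claim reduces to spherical means. The moments of `⟨η, ω⟩` over the unit
sphere satisfy the integration-by-parts relation of the weight `(1 - w²)^{λ-1/2}`, for which the
polynomials `C_k^λ` and `C_k^{λ+1} - C_{k-2}^{λ+1}` with `k ≠ 0` have mean zero. So only the terms
`k = 0` of `A_λ` and `B_λ` survive integration against a radial function; their coefficients
`i^m + 1` and `-(i^m - 1)` add up to `2`, leaving the Bessel kernel `z^{-λ} J_λ(z)`, which is also
the spherical mean of `e^{-i⟨x,y⟩}` up to the same constant. The bivector part is odd under the
reflection in the line `ℝ y` and integrates to zero.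

Exchanging sum and integral needs bounds on `z^{-λ} J_{k+λ}(z)` that decay in `k` faster than any
power and grow polynomially in `z`. Boundedness comes from a weighted sum of the squares of these
functions, the derivatives of whose truncations telescope and tend to zero; each use of the
recurrence `2ν J_ν = z (J_{ν-1} + J_{ν+1})` then trades a factor `1 + z` for a factor `k + 1`.
-/

/-! ### Gegenbauer polynomials -/

section Gegenbauer

lemma geg_zero (mu w : ℝ) : geg mu 0 w = 1 := by rw [geg]

lemma geg_one (mu w : ℝ) : geg mu 1 w = 2 * mu * w := by rw [geg]

lemma geg_add_two (mu w : ℝ) (k : ℕ) :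
    ((k : ℝ) + 2) * geg mu (k + 2) w
      = 2 * ((k : ℝ) + 1 + mu) * w * geg mu (k + 1) w - ((k : ℝ) + 2 * mu) * geg mu k w := by
  rw [geg]
  field_simp

/-- The quadratic form `c_{k+1}² - 2w c_k c_{k+1} + c_k²` in two consecutive Gegenbauer values
`c_k = C_k^μ(w)`. For `|w| ≤ 1` it is nonnegative, and the three-term recurrence
increases it only by a factor `1 + O(1/k)`, whence the polynomial growth of `C_k^μ` in `k`. -/
def gegForm (mu : ℝ) (k : ℕ) (w : ℝ) : ℝ :=
  geg mu (k + 1) w ^ 2 - 2 * w * geg mu k w * geg mu (k + 1) w + geg mu k w ^ 2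

lemma gegForm_eq_sub_mul_left (mu : ℝ) (k : ℕ) (w : ℝ) :
    gegForm mu k w = (geg mu (k + 1) w - w * geg mu k w) ^ 2 + (1 - w ^ 2) * geg mu k w ^ 2 := by
  rw [gegForm]; ring

lemma gegForm_eq_sub_mul_right (mu : ℝ) (k : ℕ) (w : ℝ) :
    gegForm mu k w
      = (w * geg mu (k + 1) w - geg mu k w) ^ 2 + (1 - w ^ 2) * geg mu (k + 1) w ^ 2 := by
  rw [gegForm]; ring

lemma geg_add_two_sub_mul (mu w : ℝ) (k : ℕ) :
    geg mu (k + 2) w - w * geg mu (k + 1) w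
      = ((k : ℝ) + 2 * mu) / ((k : ℝ) + 2) * (w * geg mu (k + 1) w - geg mu k w) := by
  have hrec := geg_add_two mu w k
  field_simp
  linear_combination hrec

variable {mu w : ℝ} {N : ℕ}

lemma sq_geg_succ_sub_mul_le (hw : |w| ≤ 1) (k : ℕ) :
    (geg mu (k + 1) w - w * geg mu k w) ^ 2 ≤ gegForm mu k w := by
  rw [gegForm_eq_sub_mul_left]
  exact le_add_of_nonneg_right
    (mul_nonneg (sub_nonneg.2 ((sq_le_one_iff_abs_le_one w).2 hw)) (sq_nonneg _))

lemma gegForm_succ_le (hmu : 0 ≤ mu) (hN : 2 * mu ≤ N) (hw : |w| ≤ 1) (k : ℕ) :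
    gegForm mu (k + 1) w ≤ (1 + N / ((k : ℝ) + 2)) ^ 2 * gegForm mu k w := by
  have hw2 : 0 ≤ 1 - w ^ 2 := by nlinarith [(sq_le_one_iff_abs_le_one w).2 hw]
  have hratio : (((k : ℝ) + 2 * mu) / ((k : ℝ) + 2)) ^ 2 ≤ (1 + N / ((k : ℝ) + 2)) ^ 2 := by
    have : 1 + N / ((k : ℝ) + 2) = ((k : ℝ) + 2 + N) / ((k : ℝ) + 2) := by field_simp
    rw [this]
    gcongr
    linarith
  have hone : (1 : ℝ) ≤ (1 + N / ((k : ℝ) + 2)) ^ 2 := by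
    have : (0 : ℝ) ≤ N / ((k : ℝ) + 2) := by positivity
    nlinarith
  rw [gegForm_eq_sub_mul_left, geg_add_two_sub_mul, gegForm_eq_sub_mul_right, mul_pow, mul_add]
  exact add_le_add (by gcongr) (le_mul_of_one_le_left (mul_nonneg hw2 (sq_nonneg _)) hone)

lemma gegForm_le (hmu : 0 ≤ mu) (hN : 2 * mu ≤ N) (hw : |w| ≤ 1) (k : ℕ) :
    gegForm mu k w ≤ (((N : ℝ) + 1) * ((k : ℝ) + 1) ^ N) ^ 2 := by
  induction k with
  | zero =>
    have hw2 : w ^ 2 ≤ 1 := (sq_le_one_iff_abs_le_one w).2 hw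
    simp only [gegForm, zero_add, geg_zero, geg_one, Nat.cast_zero, one_pow, mul_one]
    nlinarith [mul_nonneg hmu (sq_nonneg w), mul_nonneg hmu (sub_nonneg.2 hN),
      mul_nonneg (mul_nonneg hmu hmu) (sub_nonneg.2 hw2)]
  | succ k ih =>
    have hbernoulli : 1 + N / ((k : ℝ) + 2) ≤ (((k : ℝ) + 2) / ((k : ℝ) + 1)) ^ N := by
      calc 1 + N / ((k : ℝ) + 2) ≤ 1 + N * (1 / ((k : ℝ) + 1)) := by
            rw [mul_one_div]; gcongr; norm_num
        _ ≤ (1 + 1 / ((k : ℝ) + 1)) ^ N :=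
            one_add_mul_le_pow (le_trans (by norm_num) (by positivity : (0 : ℝ) ≤ _)) N
        _ = (((k : ℝ) + 2) / ((k : ℝ) + 1)) ^ N := by congr 1; field_simp; ring
    have hnonneg : 0 ≤ gegForm mu k w := (sq_nonneg _).trans (sq_geg_succ_sub_mul_le hw k)
    calc gegForm mu (k + 1) w
        ≤ (1 + N / ((k : ℝ) + 2)) ^ 2 * gegForm mu k w := gegForm_succ_le hmu hN hw k
      _ ≤ ((((k : ℝ) + 2) / ((k : ℝ) + 1)) ^ N) ^ 2
            * (((N : ℝ) + 1) * ((k : ℝ) + 1) ^ N) ^ 2 := by gcongr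
      _ = (((N : ℝ) + 1) * (((k + 1 : ℕ) : ℝ) + 1) ^ N) ^ 2 := by
          rw [← mul_pow, div_pow]; push_cast; field_simp; ring

lemma abs_geg_le (hmu : 0 ≤ mu) (hN : 2 * mu ≤ N) (hw : |w| ≤ 1) (k : ℕ) :
    |geg mu k w| ≤ ((N : ℝ) + 1) * ((k : ℝ) + 1) ^ (N + 1) := by
  induction k with
  | zero => simp [geg_zero]
  | succ k ih =>
    have hsub : |geg mu (k + 1) w - w * geg mu k w| ≤ ((N : ℝ) + 1) * ((k : ℝ) + 1) ^ N :=
      abs_le_of_sq_le_sq ((sq_geg_succ_sub_mul_le hw k).trans (gegForm_le hmu hN hw k))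
        (by positivity)
    calc |geg mu (k + 1) w|
        = |geg mu (k + 1) w - w * geg mu k w + w * geg mu k w| := by rw [sub_add_cancel]
      _ ≤ |geg mu (k + 1) w - w * geg mu k w| + |w| * |geg mu k w| := by
          rw [← abs_mul]; exact abs_add_le _ _
      _ ≤ ((N : ℝ) + 1) * ((k : ℝ) + 1) ^ N + 1 * (((N : ℝ) + 1) * ((k : ℝ) + 1) ^ (N + 1)) := by
          gcongr
      _ = ((N : ℝ) + 1) * (((k : ℝ) + 1) ^ N * ((k : ℝ) + 2)) := by ring
      _ ≤ ((N : ℝ) + 1) * (((k : ℝ) + 2) ^ N * ((k : ℝ) + 2)) := by gcongr; norm_num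
      _ = ((N : ℝ) + 1) * (((k + 1 : ℕ) : ℝ) + 1) ^ (N + 1) := by push_cast; ring

end Gegenbauer

section GegenbauerPolynomial

open Polynomial

/-- The Gegenbauer polynomial `C_k^μ` as an element of `ℝ[X]`; its values are `geg μ k`. -/
def gegPoly (mu : ℝ) : ℕ → ℝ[X]
  | 0 => 1
  | 1 => C (2 * mu) * X
  | (k + 2) => C (2 * ((k : ℝ) + 1 + mu) / ((k : ℝ) + 2)) * (X * gegPoly mu (k + 1))
      - C (((k : ℝ) + 2 * mu) / ((k : ℝ) + 2)) * gegPoly mu k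

lemma gegPoly_zero (mu : ℝ) : gegPoly mu 0 = 1 := by rw [gegPoly]

lemma gegPoly_one (mu : ℝ) : gegPoly mu 1 = C (2 * mu) * X := by rw [gegPoly]

lemma gegPoly_add_two (mu : ℝ) (k : ℕ) :
    C ((k : ℝ) + 2) * gegPoly mu (k + 2)
      = C (2 * ((k : ℝ) + 1 + mu)) * (X * gegPoly mu (k + 1))
        - C ((k : ℝ) + 2 * mu) * gegPoly mu k := by
  have hcancel (a : ℝ) (p : ℝ[X]) : C ((k : ℝ) + 2) * (C (a / ((k : ℝ) + 2)) * p) = C a * p := by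
    rw [← mul_assoc, ← C_mul, mul_div_cancel₀ _ (by positivity)]
  rw [gegPoly, mul_sub, hcancel, hcancel]

lemma eval_gegPoly (mu w : ℝ) : ∀ k, (gegPoly mu k).eval w = geg mu k w
  | 0 => by simp [gegPoly_zero, geg_zero]
  | 1 => by simp [gegPoly_one, geg_one]
  | (k + 2) => by
    have hrec := congrArg (eval w) (gegPoly_add_two mu k)
    simp only [eval_mul, eval_sub, eval_C, eval_X, eval_gegPoly mu w k,
      eval_gegPoly mu w (k + 1)] at hrec
    refine mul_left_cancel₀ (by positivity : (k : ℝ) + 2 ≠ 0) ?_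
    rw [hrec, geg_add_two, mul_assoc _ w]

lemma one_sub_sq_mul_derivative_gegPoly (mu : ℝ) : ∀ k : ℕ,
    (1 - X ^ 2) * derivative (gegPoly mu k)
      = C ((k : ℝ) + 2 * mu) * (X * gegPoly mu k) - C ((k : ℝ) + 1) * gegPoly mu (k + 1)
  | 0 => by simp [gegPoly_zero, gegPoly_one]
  | 1 => by
    have hrec := gegPoly_add_two mu 0
    rw [gegPoly_one, derivative_C_mul, derivative_X]
    simp only [zero_add, gegPoly_zero, gegPoly_one, map_add, map_mul, map_one,
      map_ofNat, Nat.cast_zero, Nat.cast_one] at hrec ⊢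
    linear_combination hrec
  | (k + 2) => by
    have hderiv := one_sub_sq_mul_derivative_gegPoly mu k
    have hderiv_succ := one_sub_sq_mul_derivative_gegPoly mu (k + 1)
    have hrec := gegPoly_add_two mu k
    have hrec_succ := gegPoly_add_two mu (k + 1)
    have hrec_deriv := congrArg derivative hrec
    refine mul_left_cancel₀ (C_ne_zero.2 (by positivity : (k : ℝ) + 2 ≠ 0)) ?_
    simp only [derivative_mul, derivative_C, derivative_X, derivative_sub] at hrec_deriv
    simp only [Nat.cast_add, Nat.cast_one, Nat.cast_ofNat, map_add, map_mul, map_one, map_ofNat,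
      map_natCast] at hderiv hderiv_succ hrec hrec_succ hrec_deriv ⊢
    linear_combination (1 - X ^ 2) * hrec_deriv
      + 2 * ((k : ℝ[X]) + 1 + C mu) * X * hderiv_succ - ((k : ℝ[X]) + 2 * C mu) * hderiv
      + ((k : ℝ[X]) + 2) * hrec_succ - ((k : ℝ[X]) + 2 * C mu) * X * hrec

/-- The polynomial `C_k^{λ+1} - C_{k-2}^{λ+1}`, with `C_{-1} = C_{-2} = 0`;
its values are `gegT λ k`. -/
def gegTPoly (lam : ℝ) (k : ℕ) : ℝ[X] :=
  gegPoly (lam + 1) k - if 2 ≤ k then gegPoly (lam + 1) (k - 2) else 0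

lemma eval_gegTPoly (lam w : ℝ) (k : ℕ) : (gegTPoly lam k).eval w = gegT lam k w := by
  rw [gegTPoly, gegT]
  split_ifs <;> simp [eval_gegPoly]

lemma gegTPoly_zero (lam : ℝ) : gegTPoly lam 0 = 1 := by simp [gegTPoly, gegPoly_zero]

lemma abs_gegT_le {lam w : ℝ} {N : ℕ} (hlam : 0 ≤ lam) (hN : 2 * (lam + 1) ≤ N) (hw : |w| ≤ 1)
    (k : ℕ) : |gegT lam k w| ≤ 2 * ((N : ℝ) + 1) * ((k : ℝ) + 1) ^ (N + 1) := by
  have hk := abs_geg_le (by positivity) hN hw k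
  rw [gegT]
  split_ifs with h
  · have hle : ((k - 2 : ℕ) : ℝ) ≤ k := Nat.cast_le.2 (Nat.sub_le k 2)
    have hk2 := abs_geg_le (by positivity) hN hw (k - 2)
    calc |geg (lam + 1) k w - geg (lam + 1) (k - 2) w|
        ≤ |geg (lam + 1) k w| + |geg (lam + 1) (k - 2) w| := abs_sub _ _
      _ ≤ ((N : ℝ) + 1) * ((k : ℝ) + 1) ^ (N + 1) + ((N : ℝ) + 1) * ((k : ℝ) + 1) ^ (N + 1) :=
          add_le_add hk (hk2.trans (by gcongr))
      _ = 2 * ((N : ℝ) + 1) * ((k : ℝ) + 1) ^ (N + 1) := by ring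
  · rw [sub_zero]
    exact hk.trans (by gcongr; linarith [(Nat.cast_nonneg N : (0 : ℝ) ≤ N)])

/-- The integration by parts rule characterising, up to a scalar, the functional
`p ↦ ∫_{-1}^1 p(w) (1-w²)^{λ-1/2} dw`, that is, the mean of `p(⟨η,ω⟩)` over the unit sphere
of dimension `2λ+1`. -/
def IsGegenbauerFunctional (lam : ℝ) (L : ℝ[X] →ₗ[ℝ] ℝ) : Prop :=
  ∀ p, L ((1 - X ^ 2) * derivative p) = (2 * lam + 1) * L (X * p)

lemma map_C_mul (L : ℝ[X] →ₗ[ℝ] ℝ) (a : ℝ) (p : ℝ[X]) : L (C a * p) = a * L p := by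
  rw [← smul_eq_C_mul, map_smul, smul_eq_mul]

namespace IsGegenbauerFunctional

variable {lam : ℝ} {L : ℝ[X] →ₗ[ℝ] ℝ}

lemma map_X (hL : IsGegenbauerFunctional lam L) (hlam : 0 ≤ lam) : L X = 0 := by
  have h := hL 1
  rw [derivative_one, mul_zero, map_zero, mul_one] at h
  exact (mul_eq_zero.1 h.symm).resolve_left (by positivity)

lemma map_gegPoly_succ (hL : IsGegenbauerFunctional lam L) (mu : ℝ) (n : ℕ) :
    ((n : ℝ) + 1) * L (gegPoly mu (n + 1))
      = ((n : ℝ) + 2 * mu - 2 * lam - 1) * L (X * gegPoly mu n) := by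
  have h := hL (gegPoly mu n)
  rw [one_sub_sq_mul_derivative_gegPoly, map_sub, map_C_mul, map_C_mul] at h
  linear_combination -h

lemma map_gegPoly_add_two (hL : IsGegenbauerFunctional lam L) (mu : ℝ) (n : ℕ) :
    ((n : ℝ) + 2) * ((n : ℝ) + 2 * lam + 2) * L (gegPoly mu (n + 2))
      = ((n : ℝ) + 2 * mu - 2 * lam) * ((n : ℝ) + 2 * mu) * L (gegPoly mu n) := by
  have hrec := congrArg L (gegPoly_add_two mu n)
  have hparts := hL.map_gegPoly_succ mu (n + 1)
  rw [map_sub, map_C_mul, map_C_mul, map_C_mul] at hrec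
  push_cast at hparts
  linear_combination 2 * ((n : ℝ) + 1 + mu) * hparts - ((n : ℝ) + 2 * mu - 2 * lam) * hrec

lemma map_gegPoly_eq_zero (hL : IsGegenbauerFunctional lam L) (hlam : 0 ≤ lam) :
    ∀ k ≠ 0, L (gegPoly lam k) = 0
  | 0, h => (h rfl).elim
  | 1, _ => by rw [gegPoly_one, map_C_mul, hL.map_X hlam, mul_zero]
  | (k + 2), _ => by
    refine mul_left_cancel₀ (by positivity : ((k : ℝ) + 2) * ((k : ℝ) + 2 * lam + 2) ≠ 0) ?_
    rw [hL.map_gegPoly_add_two]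
    rcases eq_or_ne k 0 with rfl | hk
    · simp
    · rw [hL.map_gegPoly_eq_zero hlam k hk, mul_zero, mul_zero]

lemma map_gegTPoly_eq_zero (hL : IsGegenbauerFunctional lam L) (hlam : 0 ≤ lam) :
    ∀ k ≠ 0, L (gegTPoly lam k) = 0
  | 0, h => (h rfl).elim
  | 1, _ => by
    simp [gegTPoly, gegPoly_one, map_C_mul, hL.map_X hlam, -map_mul]
  | (k + 2), _ => by
    rw [gegTPoly, if_pos (Nat.le_add_left 2 k), Nat.add_sub_cancel, map_sub, sub_eq_zero]
    refine mul_left_cancel₀ (by positivity : ((k : ℝ) + 2) * ((k : ℝ) + 2 * lam + 2) ≠ 0) ?_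
    rw [hL.map_gegPoly_add_two]
    ring

lemma map_X_pow_add_two (hL : IsGegenbauerFunctional lam L) (n : ℕ) :
    ((n : ℝ) + 2 * lam + 2) * L (X ^ (n + 2)) = ((n : ℝ) + 1) * L (X ^ n) := by
  have h := hL (X ^ (n + 1))
  have hleft : (1 - X ^ 2) * derivative (X ^ (n + 1))
      = C ((n : ℝ) + 1) * X ^ n - C ((n : ℝ) + 1) * X ^ (n + 2) := by
    rw [derivative_X_pow, Nat.add_sub_cancel]
    push_cast
    ring
  rw [hleft, ← pow_succ', map_sub, map_C_mul, map_C_mul] at h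
  linear_combination -h

lemma map_X_pow_odd (hL : IsGegenbauerFunctional lam L) (hlam : 0 ≤ lam) (j : ℕ) :
    L (X ^ (2 * j + 1)) = 0 := by
  induction j with
  | zero => simpa using hL.map_X hlam
  | succ j ih =>
    have h := hL.map_X_pow_add_two (2 * j + 1)
    rw [ih, mul_zero] at h
    exact (mul_eq_zero.1 h).resolve_left (by positivity)

lemma map_X_pow_even (hL : IsGegenbauerFunctional lam L) (hlam : 0 ≤ lam) (j : ℕ) :
    L (X ^ (2 * j)) = L 1 * Real.Gamma (lam + 1) *
      ((2 * j).factorial / (j.factorial * 2 ^ (2 * j) * Real.Gamma (j + lam + 1))) := by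
  induction j with
  | zero =>
    have : Real.Gamma (lam + 1) ≠ 0 := (Real.Gamma_pos_of_pos (by positivity)).ne'
    simp [this]
  | succ j ih =>
    have hGamma : Real.Gamma (((j + 1 : ℕ) : ℝ) + lam + 1)
        = (j + lam + 1) * Real.Gamma (j + lam + 1) := by
      rw [← Real.Gamma_add_one (by positivity)]
      push_cast
      ring_nf
    have hGamma_ne : Real.Gamma (j + lam + 1) ≠ 0 := (Real.Gamma_pos_of_pos (by positivity)).ne'
    refine mul_left_cancel₀ (by positivity : ((2 * j : ℕ) : ℝ) + 2 * lam + 2 ≠ 0) ?_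
    rw [mul_add_one 2 j, hL.map_X_pow_add_two, ih, hGamma, Nat.factorial_succ (2 * j + 1),
      Nat.factorial_succ (2 * j), Nat.factorial_succ j]
    push_cast
    field_simp
    ring

end IsGegenbauerFunctional

end GegenbauerPolynomial

/-! ### Bessel functions -/

section Bessel

lemma factorial_mul_Gamma_le {a : ℝ} (ha : 0 ≤ a) (k : ℕ) :
    k.factorial * Real.Gamma (a + 1) ≤ Real.Gamma (k + a + 1) := by
  induction k with
  | zero => simp
  | succ k ih =>
    calc ((k + 1).factorial : ℝ) * Real.Gamma (a + 1)
        = ((k : ℝ) + 1) * (k.factorial * Real.Gamma (a + 1)) := by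
          rw [Nat.factorial_succ]; push_cast; ring
      _ ≤ ((k : ℝ) + a + 1) * Real.Gamma (k + a + 1) := by gcongr; linarith
      _ = Real.Gamma (((k + 1 : ℕ) : ℝ) + a + 1) := by
          rw [← Real.Gamma_add_one (by positivity)]; push_cast; ring_nf

lemma Gamma_add_one_le_Gamma_natCast_add {a : ℝ} (ha : 0 ≤ a) (k : ℕ) :
    Real.Gamma (a + 1) ≤ Real.Gamma (k + a + 1) := by
  refine le_trans (le_mul_of_one_le_left ?_ ?_) (factorial_mul_Gamma_le ha k)
  · exact (Real.Gamma_pos_of_pos (by positivity)).le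
  · exact_mod_cast k.factorial_pos

/-- The coefficient of `t^{2j}` in the entire function `besselJt a`. -/
def besselCoeff (a : ℝ) (j : ℕ) : ℝ :=
  (-1) ^ j / (j.factorial * Real.Gamma (j + a + 1) * 2 ^ a * 4 ^ j)

lemma besselJt_eq_tsum (a t : ℝ) : besselJt a t = ∑' j : ℕ, besselCoeff a j * t ^ (2 * j) := by
  refine tsum_congr fun j ↦ ?_
  rw [besselCoeff, div_pow, pow_mul 2, show (2 : ℝ) ^ 2 = 4 by norm_num, ← mul_div_assoc, div_div,
    div_mul_eq_mul_div, mul_comm (4 ^ j : ℝ)]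

variable {a : ℝ}

lemma two_mul_besselCoeff_add_one (ha : 0 ≤ a) (j : ℕ) :
    2 * (j + a + 1) * besselCoeff (a + 1) j = besselCoeff a j := by
  have hGamma : Real.Gamma (j + (a + 1) + 1) = (j + a + 1) * Real.Gamma (j + a + 1) := by
    rw [← Real.Gamma_add_one (by positivity)]; ring_nf
  rw [besselCoeff, besselCoeff, hGamma, Real.rpow_add_one two_ne_zero]
  field_simp

lemma two_mul_succ_mul_besselCoeff_succ (a : ℝ) (j : ℕ) :
    2 * (j + 1) * besselCoeff a (j + 1) = -besselCoeff (a + 1) j := by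
  have hGamma : Real.Gamma (((j + 1 : ℕ) : ℝ) + a + 1) = Real.Gamma (j + (a + 1) + 1) := by
    push_cast; ring_nf
  rw [besselCoeff, besselCoeff, hGamma, Real.rpow_add_one two_ne_zero, Nat.factorial_succ]
  push_cast
  field_simp
  ring

lemma abs_besselCoeff_le (ha : 0 ≤ a) (j : ℕ) :
    |besselCoeff a j| ≤ (1 / 4) ^ j / j.factorial / (2 ^ a * Real.Gamma (a + 1)) := by
  have hGamma_le := Gamma_add_one_le_Gamma_natCast_add ha j
  rw [besselCoeff, abs_div, abs_pow, abs_neg, abs_one, one_pow, abs_of_nonneg (by positivity),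
    div_div, one_div_pow, div_div]
  refine one_div_le_one_div_of_le (by positivity) ?_
  calc (4 : ℝ) ^ j * (j.factorial * (2 ^ a * Real.Gamma (a + 1)))
      = j.factorial * Real.Gamma (a + 1) * 2 ^ a * 4 ^ j := by ring
    _ ≤ j.factorial * Real.Gamma (j + a + 1) * 2 ^ a * 4 ^ j := by gcongr

lemma abs_besselCoeff_mul_pow_le (ha : 0 ≤ a) (t : ℝ) (j : ℕ) :
    |besselCoeff a j * t ^ (2 * j)|
      ≤ (t ^ 2 / 4) ^ j / j.factorial / (2 ^ a * Real.Gamma (a + 1)) := by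
  rw [abs_mul, pow_mul, abs_pow, abs_sq]
  calc |besselCoeff a j| * (t ^ 2) ^ j
      ≤ (1 / 4) ^ j / j.factorial / (2 ^ a * Real.Gamma (a + 1)) * (t ^ 2) ^ j := by
        gcongr; exact abs_besselCoeff_le ha j
    _ = (t ^ 2 / 4) ^ j / j.factorial / (2 ^ a * Real.Gamma (a + 1)) := by
        rw [div_eq_mul_one_div (t ^ 2), mul_pow]; ring

lemma hasSum_besselJt (ha : 0 ≤ a) (t : ℝ) :
    HasSum (fun j : ℕ ↦ besselCoeff a j * t ^ (2 * j)) (besselJt a t) := by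
  rw [besselJt_eq_tsum]
  exact (Summable.of_norm_bounded ((Real.summable_pow_div_factorial _).div_const _)
    (abs_besselCoeff_mul_pow_le ha t)).hasSum

lemma abs_besselJt_le (ha : 0 ≤ a) (t : ℝ) :
    |besselJt a t| ≤ Real.exp (t ^ 2 / 4) / (2 ^ a * Real.Gamma (a + 1)) := by
  rw [besselJt_eq_tsum, Real.exp_eq_exp_ℝ]
  exact tsum_of_norm_bounded (f := fun j ↦ besselCoeff a j * t ^ (2 * j))
    ((NormedSpace.expSeries_div_hasSum_exp (t ^ 2 / 4)).div_const _)
    (abs_besselCoeff_mul_pow_le ha t)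

lemma hasSum_besselCoeff_mul_deriv_pow (ha : 0 ≤ a) (t : ℝ) :
    HasSum (fun j : ℕ ↦ besselCoeff a j * (((2 * j : ℕ) : ℝ) * t ^ (2 * j - 1)))
      (-t * besselJt (a + 1) t) := by
  have hshift (j : ℕ) :
      -t * (besselCoeff (a + 1) j * t ^ (2 * j))
        = besselCoeff a (j + 1) * (((2 * (j + 1) : ℕ) : ℝ) * t ^ (2 * (j + 1) - 1)) := by
    have hcoeff := two_mul_succ_mul_besselCoeff_succ a j
    rw [show 2 * (j + 1) - 1 = 2 * j + 1 by omega, pow_succ]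
    push_cast
    linear_combination -(t ^ (2 * j) * t * hcoeff)
  have hsum := (hasSum_besselJt (by positivity : 0 ≤ a + 1) t).mul_left (-t)
  simp only [hshift] at hsum
  simpa using (hasSum_nat_add_iff
    (f := fun j ↦ besselCoeff a j * (((2 * j : ℕ) : ℝ) * t ^ (2 * j - 1))) 1).1 hsum

lemma hasDerivAt_besselJt (ha : 0 ≤ a) (t : ℝ) :
    HasDerivAt (besselJt a) (-t * besselJt (a + 1) t) t := by
  have hbound (j : ℕ) (s : ℝ) (hs : s ∈ Metric.ball (0 : ℝ) (|t| + 1)) :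
      ‖besselCoeff a j * (((2 * j : ℕ) : ℝ) * s ^ (2 * j - 1))‖
        ≤ |besselCoeff a j * (((2 * j : ℕ) : ℝ) * (|t| + 1) ^ (2 * j - 1))| := by
    have hs' : |s| ≤ |t| + 1 := (mem_ball_zero_iff.1 hs).le
    rw [Real.norm_eq_abs, abs_mul, abs_mul, abs_mul, abs_mul, abs_pow, abs_pow,
      abs_of_nonneg (by positivity : 0 ≤ |t| + 1)]
    gcongr
  have hderiv := hasDerivAt_tsum_of_isPreconnected
    (hasSum_besselCoeff_mul_deriv_pow ha (|t| + 1)).summable.abs Metric.isOpen_ball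
    (convex_ball (0 : ℝ) (|t| + 1)).isPreconnected
    (fun j s _ ↦ (hasDerivAt_pow (2 * j) s).const_mul (besselCoeff a j)) hbound
    (Metric.mem_ball_self (by positivity)) (hasSum_besselJt ha 0).summable
    (mem_ball_zero_iff.2 (lt_add_one |t|))
  rw [(hasSum_besselCoeff_mul_deriv_pow ha t).tsum_eq] at hderiv
  exact hderiv.congr_of_eventuallyEq (.of_forall (besselJt_eq_tsum a))

lemma continuous_besselJt (ha : 0 ≤ a) : Continuous (besselJt a) :=
  continuous_iff_continuousAt.2 fun t ↦ (hasDerivAt_besselJt ha t).continuousAt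

lemma two_mul_besselJt_add_one (ha : 0 ≤ a) (t : ℝ) :
    2 * (a + 1) * besselJt (a + 1) t = besselJt a t + t ^ 2 * besselJt (a + 2) t := by
  have h0 := hasSum_besselJt ha t
  have h1 := (hasSum_besselJt (by positivity : 0 ≤ a + 1) t).mul_left (2 * (a + 1))
  have h2 := (hasSum_besselJt (by positivity : 0 ≤ a + 2) t).mul_left (t ^ 2)
  have hdiff := (hasSum_nat_add_iff' 1).2 (h1.sub h0)
  have hzero : 2 * (a + 1) * besselCoeff (a + 1) 0 = besselCoeff a 0 := by
    simpa using two_mul_besselCoeff_add_one ha 0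
  have hterm (j : ℕ) : 2 * (a + 1) * (besselCoeff (a + 1) (j + 1) * t ^ (2 * (j + 1)))
      - besselCoeff a (j + 1) * t ^ (2 * (j + 1))
        = t ^ 2 * (besselCoeff (a + 2) j * t ^ (2 * j)) := by
    have horder := two_mul_besselCoeff_add_one ha (j + 1)
    have hindex := two_mul_succ_mul_besselCoeff_succ (a + 1) j
    rw [show a + 1 + 1 = a + 2 by ring] at hindex
    push_cast at horder
    rw [mul_add_one 2 j, pow_add]
    linear_combination t ^ (2 * j) * t ^ 2 * (horder - hindex)
  simp only [hterm, Finset.sum_range_one] at hdiff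
  rw [← mul_assoc, hzero, sub_self, sub_zero] at hdiff
  linear_combination hdiff.unique h2

lemma besselJ_div_rpow (a : ℝ) {t : ℝ} (ht : 0 < t) : besselJ a t / t ^ a = besselJt a t := by
  rw [besselJ, besselJt, ← tsum_div_const]
  refine tsum_congr fun j ↦ ?_
  have hpow : (t / 2) ^ (2 * (j : ℝ) + a) = (t / 2) ^ (2 * j) * (t ^ a / 2 ^ a) := by
    rw [Real.rpow_add (by positivity), ← Real.div_rpow ht.le zero_le_two,
      ← Real.rpow_natCast _ (2 * j)]
    push_cast
    rfl
  have : t ^ a ≠ 0 := (Real.rpow_pos_of_pos ht a).ne'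
  rw [hpow]
  field_simp

end Bessel

section BesselMode

/-- The function `z^{-λ} J_{k+λ}(z) = z^k J̃_{k+λ}(z)`, the radial coefficient of the degree `k`
zonal term of the Clifford–Fourier kernel. -/
def besselMode (lam : ℝ) (k : ℕ) (z : ℝ) : ℝ := z ^ k * besselJt ((k : ℝ) + lam) z

lemma besselMode_zero (lam z : ℝ) : besselMode lam 0 z = besselJt lam z := by
  simp [besselMode]

lemma besselMode_succ_zero (lam : ℝ) (k : ℕ) : besselMode lam (k + 1) 0 = 0 := by
  simp [besselMode]

variable {lam : ℝ}

lemma continuous_besselMode (hlam : 0 ≤ lam) (k : ℕ) : Continuous (besselMode lam k) :=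
  (continuous_pow k).mul (continuous_besselJt (by positivity))

lemma two_mul_besselMode_succ (hlam : 0 ≤ lam) (k : ℕ) (z : ℝ) :
    2 * ((k : ℝ) + 1 + lam) * besselMode lam (k + 1) z
      = z * (besselMode lam k z + besselMode lam (k + 2) z) := by
  have hrec := two_mul_besselJt_add_one (by positivity : 0 ≤ (k : ℝ) + lam) z
  have h1 : ((k + 1 : ℕ) : ℝ) + lam = (k : ℝ) + lam + 1 := by push_cast; ring
  have h2 : ((k + 2 : ℕ) : ℝ) + lam = (k : ℝ) + lam + 2 := by push_cast; ring
  rw [besselMode, besselMode, besselMode, h1, h2]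
  linear_combination z ^ (k + 1) * hrec

lemma hasDerivAt_besselMode_zero (hlam : 0 ≤ lam) (z : ℝ) :
    HasDerivAt (besselMode lam 0) (-besselMode lam 1 z) z := by
  have hmode : besselMode lam 0 = besselJt lam := funext (besselMode_zero lam)
  rw [hmode]
  convert hasDerivAt_besselJt hlam z using 1
  rw [besselMode, pow_one, Nat.cast_one, add_comm (1 : ℝ), neg_mul]

lemma hasDerivAt_besselMode_succ (hlam : 0 ≤ lam) (n : ℕ) (z : ℝ) :
    HasDerivAt (besselMode lam (n + 1))
      ((((n : ℝ) + 1) * besselMode lam n z - ((n : ℝ) + 1 + 2 * lam) * besselMode lam (n + 2) z)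
        / (2 * ((n : ℝ) + 1 + lam))) z := by
  have hrec := two_mul_besselJt_add_one (by positivity : 0 ≤ (n : ℝ) + lam) z
  have h1 : ((n + 1 : ℕ) : ℝ) + lam = (n : ℝ) + lam + 1 := by push_cast; ring
  have h2 : ((n + 2 : ℕ) : ℝ) + lam = (n : ℝ) + lam + 2 := by push_cast; ring
  have hderiv := (hasDerivAt_pow (n + 1) z).mul
    (hasDerivAt_besselJt (by positivity : 0 ≤ (n : ℝ) + lam + 1) z)
  rw [show (n : ℝ) + lam + 1 + 1 = (n : ℝ) + lam + 2 by ring] at hderiv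
  rw [show besselMode lam (n + 1) = (· ^ (n + 1)) * besselJt ((n : ℝ) + lam + 1) by
    ext; rw [besselMode, h1]; rfl]
  refine hderiv.congr_deriv (Eq.symm ?_)
  rw [besselMode, besselMode, h2, Nat.add_sub_cancel, div_eq_iff (by positivity)]
  push_cast
  linear_combination (-((n : ℝ) + 1) * z ^ n) * hrec

lemma abs_besselMode_le_pow_div_factorial (hlam : 0 ≤ lam) (k : ℕ) {z : ℝ} (hz : 0 ≤ z) :
    |besselMode lam k z|
      ≤ Real.exp (z ^ 2 / 4) / Real.Gamma (lam + 1) * (z ^ k / k.factorial) := by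
  have hrpow : (1 : ℝ) ≤ 2 ^ ((k : ℝ) + lam) :=
    Real.one_le_rpow one_le_two (by positivity)
  rw [besselMode, abs_mul, abs_of_nonneg (pow_nonneg hz k)]
  calc z ^ k * |besselJt (k + lam) z|
      ≤ z ^ k * (Real.exp (z ^ 2 / 4) / (2 ^ ((k : ℝ) + lam) * Real.Gamma (k + lam + 1))) := by
        gcongr; exact abs_besselJt_le (by positivity) z
    _ ≤ z ^ k * (Real.exp (z ^ 2 / 4) / (1 * (k.factorial * Real.Gamma (lam + 1)))) := by
        gcongr; exact factorial_mul_Gamma_le hlam k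
    _ = Real.exp (z ^ 2 / 4) / Real.Gamma (lam + 1) * (z ^ k / k.factorial) := by
        rw [one_mul]; field_simp

/-- The weights `τ_n = 2 (2λ+1)_n / n!` of the Parseval sum `besselEnergy`. -/
def besselWeight (lam : ℝ) : ℕ → ℝ
  | 0 => 2
  | (n + 1) => besselWeight lam n * (((n : ℝ) + 1 + 2 * lam) / ((n : ℝ) + 1))

lemma one_le_besselWeight (hlam : 0 ≤ lam) (n : ℕ) : 1 ≤ besselWeight lam n := by
  induction n with
  | zero => norm_num [besselWeight]
  | succ n ih =>
    refine one_le_mul_of_one_le_of_one_le ih ?_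
    rw [one_le_div (by positivity)]
    linarith

lemma besselWeight_le (hlam : 0 ≤ lam) (n : ℕ) : besselWeight lam n ≤ 2 * (1 + 2 * lam) ^ n := by
  induction n with
  | zero => simp [besselWeight]
  | succ n ih =>
    rw [besselWeight, pow_succ, ← mul_assoc]
    gcongr
    rw [div_le_iff₀ (by positivity)]
    nlinarith [mul_nonneg hlam (Nat.cast_nonneg n : (0 : ℝ) ≤ n)]

/-- The truncation of the Parseval sum `Σ_k ‖coefficient k of the plane wave‖²`. The weights are
chosen so that its derivative telescopes to `-τ_n j_n j_{n+1}`, where `j_k = besselMode λ k`. -/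
def besselEnergy (lam : ℝ) (n : ℕ) (z : ℝ) : ℝ :=
  besselMode lam 0 z ^ 2 + ∑ k ∈ Finset.range n,
    besselWeight lam k * (((k : ℝ) + 1 + lam) / ((k : ℝ) + 1)) * besselMode lam (k + 1) z ^ 2

lemma hasDerivAt_besselEnergy (hlam : 0 ≤ lam) (n : ℕ) (z : ℝ) :
    HasDerivAt (besselEnergy lam n)
      (-(besselWeight lam n * besselMode lam n z * besselMode lam (n + 1) z)) z := by
  induction n with
  | zero =>
    have hmode := (hasDerivAt_besselMode_zero hlam z).pow 2
    have henergy : besselEnergy lam 0 = besselMode lam 0 ^ 2 := by ext; simp [besselEnergy]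
    rw [henergy]
    refine hmode.congr_deriv (Eq.symm ?_)
    rw [besselWeight]
    push_cast
    ring
  | succ n ih =>
    have hmode := ((hasDerivAt_besselMode_succ hlam n z).pow 2).const_mul
      (besselWeight lam n * (((n : ℝ) + 1 + lam) / ((n : ℝ) + 1)))
    have henergy : besselEnergy lam (n + 1) = fun z ↦ besselEnergy lam n z
        + besselWeight lam n * (((n : ℝ) + 1 + lam) / ((n : ℝ) + 1))
          * (besselMode lam (n + 1) ^ 2) z := by
      ext; simp [besselEnergy, Finset.sum_range_succ, add_assoc]
    rw [henergy]
    refine (ih.add hmode).congr_deriv (Eq.symm ?_)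
    rw [besselWeight]
    push_cast
    field_simp
    ring

lemma besselEnergy_zero (lam : ℝ) (n : ℕ) : besselEnergy lam n 0 = besselMode lam 0 0 ^ 2 := by
  simp [besselEnergy, besselMode_succ_zero]

lemma sq_besselMode_le_besselEnergy (hlam : 0 ≤ lam) {k n : ℕ} (hkn : k ≤ n) (z : ℝ) :
    besselMode lam k z ^ 2 ≤ besselEnergy lam n z := by
  have hcoeff (i : ℕ) : 1 ≤ besselWeight lam i * (((i : ℝ) + 1 + lam) / ((i : ℝ) + 1)) := by
    refine one_le_mul_of_one_le_of_one_le (one_le_besselWeight hlam i) ?_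
    rw [one_le_div (by positivity)]
    linarith
  have hnonneg (i : ℕ) : 0 ≤ besselWeight lam i * (((i : ℝ) + 1 + lam) / ((i : ℝ) + 1))
      * besselMode lam (i + 1) z ^ 2 :=
    mul_nonneg (zero_le_one.trans (hcoeff i)) (sq_nonneg _)
  rcases k with _ | k
  · exact le_add_of_nonneg_right (Finset.sum_nonneg fun i _ ↦ hnonneg i)
  · calc besselMode lam (k + 1) z ^ 2
        ≤ besselWeight lam k * (((k : ℝ) + 1 + lam) / ((k : ℝ) + 1))
            * besselMode lam (k + 1) z ^ 2 := le_mul_of_one_le_left (sq_nonneg _) (hcoeff k)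
      _ ≤ ∑ i ∈ Finset.range n, besselWeight lam i * (((i : ℝ) + 1 + lam) / ((i : ℝ) + 1))
            * besselMode lam (i + 1) z ^ 2 :=
          Finset.single_le_sum (f := fun i : ℕ ↦ besselWeight lam i
            * (((i : ℝ) + 1 + lam) / ((i : ℝ) + 1)) * besselMode lam (i + 1) z ^ 2)
            (fun i _ ↦ hnonneg i) (Finset.mem_range.2 hkn)
      _ ≤ besselEnergy lam n z := le_add_of_nonneg_left (sq_nonneg _)

lemma abs_deriv_besselEnergy_le (hlam : 0 ≤ lam) (n : ℕ) {t z : ℝ} (ht : 0 ≤ t) (htz : t ≤ z) :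
    |-(besselWeight lam n * besselMode lam n t * besselMode lam (n + 1) t)|
      ≤ 2 * (Real.exp (z ^ 2 / 4) / Real.Gamma (lam + 1)) ^ 2 * Real.exp z
        * (((1 + 2 * lam) * z) ^ n / n.factorial) := by
  have hz : 0 ≤ z := ht.trans htz
  set M := Real.exp (z ^ 2 / 4) / Real.Gamma (lam + 1)
  have hmode (k : ℕ) : |besselMode lam k t| ≤ M * (z ^ k / k.factorial) :=
    (abs_besselMode_le_pow_div_factorial hlam k ht).trans (by unfold M; gcongr)
  have hweight : |besselWeight lam n| ≤ 2 * (1 + 2 * lam) ^ n := by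
    rw [abs_of_nonneg (zero_le_one.trans (one_le_besselWeight hlam n))]
    exact besselWeight_le hlam n
  rw [abs_neg, abs_mul, abs_mul]
  calc |besselWeight lam n| * |besselMode lam n t| * |besselMode lam (n + 1) t|
      ≤ 2 * (1 + 2 * lam) ^ n * (M * (z ^ n / n.factorial)) * (M * Real.exp z) := by
        gcongr
        · exact hmode n
        · exact (hmode (n + 1)).trans (by gcongr; exact Real.pow_div_factorial_le_exp _ hz _)
    _ = 2 * M ^ 2 * Real.exp z * (((1 + 2 * lam) * z) ^ n / n.factorial) := by
        rw [mul_pow]; ring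

lemma abs_besselMode_le (hlam : 0 ≤ lam) (k : ℕ) {z : ℝ} (hz : 0 ≤ z) :
    |besselMode lam k z| ≤ |besselMode lam 0 0| := by
  set ε : ℕ → ℝ := fun n ↦ 2 * (Real.exp (z ^ 2 / 4) / Real.Gamma (lam + 1)) ^ 2 * Real.exp z
    * (((1 + 2 * lam) * z) ^ n / n.factorial)
  have hmvt (n : ℕ) : besselEnergy lam n z ≤ besselMode lam 0 0 ^ 2 + ε n * z := by
    have h := norm_image_sub_le_of_norm_deriv_le_segment'
      (fun t _ ↦ (hasDerivAt_besselEnergy hlam n t).hasDerivWithinAt)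
      (fun t ht ↦ abs_deriv_besselEnergy_le hlam n ht.1 ht.2.le) z (Set.right_mem_Icc.2 hz)
    rw [besselEnergy_zero, sub_zero] at h
    linarith [le_of_abs_le h]
  have hlim : Filter.Tendsto (fun n ↦ besselMode lam 0 0 ^ 2 + ε n * z) Filter.atTop
      (nhds (besselMode lam 0 0 ^ 2)) := by
    simpa using (((FloorSemiring.tendsto_pow_div_factorial_atTop ((1 + 2 * lam) * z)).const_mul
      (2 * (Real.exp (z ^ 2 / 4) / Real.Gamma (lam + 1)) ^ 2 * Real.exp z)).mul_const z).const_add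
        (besselMode lam 0 0 ^ 2)
  refine sq_le_sq.1 (ge_of_tendsto hlim ?_)
  filter_upwards [Filter.eventually_ge_atTop k] with n hn
  exact (sq_besselMode_le_besselEnergy hlam hn z).trans (hmvt n)

lemma add_two_mul_abs_besselMode_succ_le (hlam : 0 ≤ lam) (k : ℕ) {z : ℝ} (hz : 0 ≤ z) :
    ((k : ℝ) + 2) * |besselMode lam (k + 1) z|
      ≤ z * (|besselMode lam k z| + |besselMode lam (k + 2) z|) := by
  calc ((k : ℝ) + 2) * |besselMode lam (k + 1) z|
      ≤ 2 * ((k : ℝ) + 1 + lam) * |besselMode lam (k + 1) z| := by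
        gcongr; linarith [(Nat.cast_nonneg k : (0 : ℝ) ≤ k)]
    _ = |2 * ((k : ℝ) + 1 + lam) * besselMode lam (k + 1) z| := by
        rw [abs_mul, abs_of_nonneg (by positivity : 0 ≤ 2 * ((k : ℝ) + 1 + lam))]
    _ = z * |besselMode lam k z + besselMode lam (k + 2) z| := by
        rw [two_mul_besselMode_succ hlam, abs_mul, abs_of_nonneg hz]
    _ ≤ z * (|besselMode lam k z| + |besselMode lam (k + 2) z|) := by
        gcongr; exact abs_add_le _ _

lemma pow_succ_mul_abs_besselMode_succ_le (hlam : 0 ≤ lam) {s : ℕ} {B z : ℝ} (hz : 0 ≤ z)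
    (hbound : ∀ k : ℕ, ((k : ℝ) + 1) ^ s * |besselMode lam k z| ≤ B) (k : ℕ) :
    ((k : ℝ) + 2) ^ (s + 1) * |besselMode lam (k + 1) z| ≤ z * ((2 ^ s + 1) * B) := by
  have hprev : ((k : ℝ) + 2) ^ s * |besselMode lam k z| ≤ 2 ^ s * B := by
    calc ((k : ℝ) + 2) ^ s * |besselMode lam k z|
        ≤ (2 * ((k : ℝ) + 1)) ^ s * |besselMode lam k z| := by gcongr; linarith
      _ = 2 ^ s * (((k : ℝ) + 1) ^ s * |besselMode lam k z|) := by rw [mul_pow, mul_assoc]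
      _ ≤ 2 ^ s * B := by gcongr; exact hbound k
  have hnext : ((k : ℝ) + 2) ^ s * |besselMode lam (k + 2) z| ≤ B := by
    refine le_trans (mul_le_mul_of_nonneg_right ?_ (abs_nonneg _)) (hbound (k + 2))
    exact pow_le_pow_left₀ (by positivity) (by push_cast; linarith) s
  calc ((k : ℝ) + 2) ^ (s + 1) * |besselMode lam (k + 1) z|
      = ((k : ℝ) + 2) ^ s * (((k : ℝ) + 2) * |besselMode lam (k + 1) z|) := by ring
    _ ≤ ((k : ℝ) + 2) ^ s * (z * (|besselMode lam k z| + |besselMode lam (k + 2) z|)) := by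
        gcongr ?_ * ?_; exact add_two_mul_abs_besselMode_succ_le hlam k hz
    _ = z * (((k : ℝ) + 2) ^ s * |besselMode lam k z|
          + ((k : ℝ) + 2) ^ s * |besselMode lam (k + 2) z|) := by ring
    _ ≤ z * (2 ^ s * B + B) := by gcongr
    _ = z * ((2 ^ s + 1) * B) := by ring

lemma exists_pow_mul_abs_besselMode_le (hlam : 0 ≤ lam) (s : ℕ) :
    ∃ B, 0 ≤ B ∧ ∀ (k : ℕ) (z : ℝ), 0 ≤ z →
      ((k : ℝ) + 1) ^ s * |besselMode lam k z| ≤ B * (1 + z) ^ s := by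
  induction s with
  | zero =>
    exact ⟨|besselMode lam 0 0|, abs_nonneg _, fun k z hz ↦ by
      simpa using abs_besselMode_le hlam k hz⟩
  | succ s ih =>
    obtain ⟨B, hB, hbound⟩ := ih
    refine ⟨|besselMode lam 0 0| + (2 ^ s + 1) * B, by positivity, fun k z hz ↦ ?_⟩
    rcases k with _ | k
    · calc (((0 : ℕ) : ℝ) + 1) ^ (s + 1) * |besselMode lam 0 z|
          ≤ |besselMode lam 0 0| * 1 := by simpa using abs_besselMode_le hlam 0 hz
        _ ≤ (|besselMode lam 0 0| + (2 ^ s + 1) * B) * (1 + z) ^ (s + 1) := by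
          gcongr
          · exact le_add_of_nonneg_right (by positivity)
          · exact one_le_pow₀ (by linarith)
    · calc (((k + 1 : ℕ) : ℝ) + 1) ^ (s + 1) * |besselMode lam (k + 1) z|
          = ((k : ℝ) + 2) ^ (s + 1) * |besselMode lam (k + 1) z| := by
            push_cast; ring
        _ ≤ z * ((2 ^ s + 1) * (B * (1 + z) ^ s)) :=
            pow_succ_mul_abs_besselMode_succ_le hlam hz (fun k ↦ hbound k z hz) k
        _ ≤ (1 + z) * ((2 ^ s + 1) * (B * (1 + z) ^ s)) := by gcongr; linarith
        _ = (2 ^ s + 1) * B * (1 + z) ^ (s + 1) := by ring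
        _ ≤ (|besselMode lam 0 0| + (2 ^ s + 1) * B) * (1 + z) ^ (s + 1) := by
            gcongr; exact le_add_of_nonneg_left (abs_nonneg _)

end BesselMode

/-! ### Polar coordinates and spherical means -/

section Sphere

variable {E : Type*} [NormedAddCommGroup E] [InnerProductSpace ℝ E] {η : E}

lemma abs_inner_le_one_of_mem_sphere (hη : ‖η‖ = 1) (ω : Metric.sphere (0 : E) 1) :
    |inner ℝ η (ω : E)| ≤ 1 := by
  simpa [hη] using abs_real_inner_le_norm η (ω : E)

lemma hasLineDerivAt_inner_pow (hη : ‖η‖ = 1) (n : ℕ) (x : E) :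
    HasLineDerivAt ℝ (fun x ↦ inner ℝ η x ^ n) (n * inner ℝ η x ^ (n - 1)) x η := by
  have h := (HasFDerivAt.pow (innerSL ℝ η).hasFDerivAt n (x := x)).hasLineDerivAt η
  simpa [hη] using h

lemma hasLineDerivAt_gaussian (η x : E) :
    HasLineDerivAt ℝ (fun x ↦ Real.exp (-‖x‖ ^ 2))
      (-2 * inner ℝ η x * Real.exp (-‖x‖ ^ 2)) x η := by
  have h := (hasStrictFDerivAt_norm_sq x).hasFDerivAt.fun_neg.exp.hasLineDerivAt η
  convert! h using 1
  simp [real_inner_comm]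
  ring

variable [FiniteDimensional ℝ E] [MeasurableSpace E] [BorelSpace E]

lemma integrable_polar [Nontrivial E] {F : Type*} [NormedAddCommGroup F] {G : E → F}
    (hG : Integrable G) :
    Integrable (fun p : Metric.sphere (0 : E) 1 × Set.Ioi (0 : ℝ) ↦ G ((p.2 : ℝ) • (p.1 : E)))
      (volume.toSphere.prod (.volumeIoiPow (Module.finrank ℝ E - 1))) := by
  rw [← volume.measurePreserving_homeomorphUnitSphereProd.integrable_comp_emb
    (Homeomorph.measurableEmbedding _)]
  refine Integrable.congr ((integrableOn_iff_comap_subtypeVal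
    (measurableSet_singleton (0 : E)).compl).1 hG.integrableOn) (.of_forall fun x ↦ ?_)
  have hx : ‖(x : E)‖ ≠ 0 := norm_ne_zero_iff.2 x.2
  simp [smul_smul, hx]

variable {F : Type*} [NormedAddCommGroup F] [NormedSpace ℝ F]

lemma integral_eq_integral_sphere [Nontrivial E] {G : E → F} (hG : Integrable G) :
    ∫ x, G x = ∫ r in Set.Ioi (0 : ℝ), r ^ (Module.finrank ℝ E - 1)
      • ∫ ω : Metric.sphere (0 : E) 1, G (r • (ω : E)) ∂volume.toSphere := by
  set d := Module.finrank ℝ E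
  have hpolar (x : ({0}ᶜ : Set E)) : G x = G (((homeomorphUnitSphereProd E x).2 : ℝ)
      • ((homeomorphUnitSphereProd E x).1 : E)) := by
    have hx : ‖(x : E)‖ ≠ 0 := norm_ne_zero_iff.2 x.2
    simp [smul_smul, hx]
  calc ∫ x, G x
      = ∫ x : ({0}ᶜ : Set E), G x ∂volume.comap Subtype.val := by
        rw [integral_subtype_comap (measurableSet_singleton _).compl G, restrict_compl_singleton]
    _ = ∫ p : Metric.sphere (0 : E) 1 × Set.Ioi (0 : ℝ), G ((p.2 : ℝ) • (p.1 : E))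
          ∂volume.toSphere.prod (.volumeIoiPow (d - 1)) := by
        rw [← volume.measurePreserving_homeomorphUnitSphereProd.integral_comp
          (Homeomorph.measurableEmbedding _)]
        exact integral_congr_ae (.of_forall hpolar)
    _ = ∫ r : Set.Ioi (0 : ℝ), (∫ ω : Metric.sphere (0 : E) 1, G ((r : ℝ) • (ω : E))
          ∂volume.toSphere) ∂.volumeIoiPow (d - 1) :=
        integral_prod_symm _ (integrable_polar hG)
    _ = _ := by
        simp only [Measure.volumeIoiPow, ENNReal.ofReal]
        rw [integral_withDensity_eq_integral_smul, integral_subtype_comap measurableSet_Ioi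
          fun r ↦ Real.toNNReal (r ^ (d - 1)) • ∫ ω : Metric.sphere (0 : E) 1, G (r • (ω : E))
            ∂volume.toSphere]
        · refine setIntegral_congr_fun measurableSet_Ioi fun r hr ↦ ?_
          rw [NNReal.smul_def, Real.coe_toNNReal _ (pow_nonneg (Set.mem_Ioi.1 hr).le _)]
        · exact (measurable_subtype_coe.pow_const _).real_toNNReal

lemma integral_norm_eq_toSphere_smul [Nontrivial E] (g : ℝ → F) :
    ∫ x : E, g ‖x‖ = (volume : Measure E).toSphere.real Set.univ
      • ∫ r in Set.Ioi (0 : ℝ), r ^ (Module.finrank ℝ E - 1) • g r := by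
  rw [integral_fun_norm_addHaar, Measure.toSphere_real_apply_univ, mul_smul, Nat.cast_smul_eq_nsmul]

lemma integral_radial_smul_eq_of_sphere_mean [Nontrivial E] {f₀ : ℝ → ℝ} {G : E → F} {g : ℝ → F}
    (hint : Integrable fun x ↦ f₀ ‖x‖ • G x)
    (hmean : ∀ r, 0 < r → ∫ ω : Metric.sphere (0 : E) 1, G (r • (ω : E)) ∂volume.toSphere
      = (volume : Measure E).toSphere.real Set.univ • g r) :
    ∫ x, f₀ ‖x‖ • G x = ∫ x : E, f₀ ‖x‖ • g ‖x‖ := by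
  rw [integral_eq_integral_sphere hint, integral_norm_eq_toSphere_smul fun r ↦ f₀ r • g r,
    ← integral_smul]
  refine setIntegral_congr_fun measurableSet_Ioi fun r (hr : 0 < r) ↦ ?_
  have hnorm (ω : Metric.sphere (0 : E) 1) : ‖r • (ω : E)‖ = r := by
    simp [norm_smul, abs_of_pos hr]
  simp only [hnorm, integral_smul, hmean r hr]
  rw [smul_comm (f₀ r), smul_comm (r ^ _)]

lemma two_rpow_mul_Gamma_mul_toSphere_univ [Nontrivial E] {lam : ℝ}
    (hdim : (Module.finrank ℝ E : ℝ) = 2 * lam + 2) :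
    2 ^ lam * Real.Gamma (lam + 1) * (volume : Measure E).toSphere.real Set.univ
      = (2 * Real.pi) ^ (lam + 1) := by
  have hpos : 0 < lam + 1 := by
    have : (0 : ℝ) < Module.finrank ℝ E := by exact_mod_cast Module.finrank_pos
    linarith
  have hhalf : (Module.finrank ℝ E : ℝ) / 2 = lam + 1 := by rw [hdim]; ring
  have hpow : √Real.pi ^ Module.finrank ℝ E = Real.pi ^ (lam + 1) := by
    rw [Real.sqrt_eq_rpow, ← Real.rpow_natCast, ← Real.rpow_mul Real.pi_pos.le, ← hhalf]
    ring_nf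
  rw [Measure.toSphere_real_apply_univ, Measure.real, InnerProductSpace.volume_ball, hhalf, hpow,
    ENNReal.ofReal_one, one_pow, one_mul, Real.Gamma_add_one hpos.ne',
    ENNReal.toReal_ofReal (by positivity), hdim, Real.mul_rpow two_pos.le Real.pi_pos.le,
    Real.rpow_add_one two_ne_zero]
  field_simp

lemma integrable_norm_pow_mul_gaussian [Nontrivial E] (n : ℕ) :
    Integrable fun x : E ↦ ‖x‖ ^ n * Real.exp (-‖x‖ ^ 2) := by
  rw [integrable_fun_norm_addHaar volume (f := fun r ↦ r ^ n * Real.exp (-r ^ 2))]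
  have hradial := (integrable_rpow_mul_exp_neg_mul_sq one_pos
    (s := ((Module.finrank ℝ E - 1 + n : ℕ) : ℝ))
    (neg_one_lt_zero.trans_le (Nat.cast_nonneg _))).integrableOn (s := Set.Ioi 0)
  refine hradial.congr_fun (fun r _ ↦ ?_) measurableSet_Ioi
  simp only [Real.rpow_natCast, pow_add, smul_eq_mul, neg_one_mul, mul_assoc]

lemma integrable_inner_pow_mul_gaussian [Nontrivial E] (hη : ‖η‖ = 1) (n : ℕ) :
    Integrable fun x : E ↦ inner ℝ η x ^ n * Real.exp (-‖x‖ ^ 2) := by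
  refine (integrable_norm_pow_mul_gaussian n).mono' (by fun_prop) (.of_forall fun x ↦ ?_)
  rw [norm_mul, Real.norm_eq_abs, Real.norm_eq_abs, abs_pow, Real.abs_exp]
  have hinner : |inner ℝ η x| ≤ ‖x‖ := by simpa [hη] using abs_real_inner_le_norm η x
  gcongr

lemma two_mul_integral_inner_pow_succ_mul_gaussian [Nontrivial E] (hη : ‖η‖ = 1) (n : ℕ) :
    2 * ∫ x : E, inner ℝ η x ^ (n + 1) * Real.exp (-‖x‖ ^ 2)
      = n * ∫ x : E, inner ℝ η x ^ (n - 1) * Real.exp (-‖x‖ ^ 2) := by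
  have hint := integrable_inner_pow_mul_gaussian (E := E) hη
  have hright (x : E) : inner ℝ η x ^ n * (-2 * inner ℝ η x * Real.exp (-‖x‖ ^ 2))
      = -2 * (inner ℝ η x ^ (n + 1) * Real.exp (-‖x‖ ^ 2)) := by ring
  have hparts := integral_bilinear_hasLineDerivAt_right_eq_neg_left_of_integrable (μ := volume)
    (B := ContinuousLinearMap.mul ℝ ℝ) (v := η)
    (by simpa only [ContinuousLinearMap.mul_apply', mul_assoc] using (hint (n - 1)).const_mul _)
    (by simpa only [ContinuousLinearMap.mul_apply', hright] using (hint (n + 1)).const_mul (-2))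
    (hint n) (fun x _ ↦ hasLineDerivAt_inner_pow hη n x)
    (fun x _ ↦ hasLineDerivAt_gaussian η x)
  simp only [ContinuousLinearMap.mul_apply', hright] at hparts
  simp only [mul_assoc, integral_const_mul] at hparts
  linarith

open Polynomial

/-- The linear functional `p ↦ ∫ p(⟨η, ω⟩) dσ(ω)` over the unit sphere, `σ` being the surface
measure. -/
def zonalIntegral (η : E) : ℝ[X] →ₗ[ℝ] ℝ where
  toFun p := ∫ ω : Metric.sphere (0 : E) 1, p.eval (inner ℝ η (ω : E)) ∂volume.toSphere
  map_add' p q := by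
    have hint (p : ℝ[X]) : Integrable (fun ω : Metric.sphere (0 : E) 1 ↦
        p.eval (inner ℝ η (ω : E))) volume.toSphere :=
      (p.continuous.comp (by fun_prop)).integrable_of_hasCompactSupport
        (HasCompactSupport.of_compactSpace _)
    simp only [eval_add]
    exact integral_add (hint p) (hint q)
  map_smul' a p := by
    simp only [eval_smul, RingHom.id_apply]
    exact integral_smul a _

lemma zonalIntegral_apply (η : E) (p : ℝ[X]) : zonalIntegral η p
    = ∫ ω : Metric.sphere (0 : E) 1, p.eval (inner ℝ η (ω : E)) ∂volume.toSphere :=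
  rfl

lemma zonalIntegral_one (η : E) :
    zonalIntegral η 1 = (volume : Measure E).toSphere.real Set.univ := by
  simp [zonalIntegral_apply]

lemma integral_inner_pow_mul_gaussian [Nontrivial E] (hη : ‖η‖ = 1) (n : ℕ) :
    ∫ x : E, inner ℝ η x ^ n * Real.exp (-‖x‖ ^ 2)
      = 1 / 2 * Real.Gamma ((n + Module.finrank ℝ E) / 2) * zonalIntegral η (X ^ n) := by
  set d := Module.finrank ℝ E
  have hd : 1 ≤ d := Module.finrank_pos
  have hradial := integral_rpow_mul_exp_neg_rpow two_pos (q := ((d - 1 + n : ℕ) : ℝ))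
    (neg_one_lt_zero.trans_le (Nat.cast_nonneg _))
  have hexp : (((d - 1 + n : ℕ) : ℝ) + 1) / 2 = ((n : ℝ) + d) / 2 := by push_cast [hd]; ring
  rw [integral_eq_integral_sphere (integrable_inner_pow_mul_gaussian hη n), ← hexp, ← hradial,
    ← integral_mul_const]
  refine setIntegral_congr_fun measurableSet_Ioi fun r _ ↦ ?_
  have hscale (ω : Metric.sphere (0 : E) 1) :
      inner ℝ η (r • (ω : E)) ^ n * Real.exp (-‖r • (ω : E)‖ ^ 2)
        = r ^ n * Real.exp (-r ^ 2) * inner ℝ η (ω : E) ^ n := by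
    rw [inner_smul_right, norm_smul, norm_eq_of_mem_sphere, mul_one, Real.norm_eq_abs, sq_abs,
      mul_pow]
    ring
  simp only [hscale, integral_const_mul, zonalIntegral_apply, eval_pow, eval_X, smul_eq_mul,
    Real.rpow_natCast, Real.rpow_two, pow_add]
  ring

variable {lam : ℝ}

lemma natCast_mul_zonalIntegral_X_pow [Nontrivial E]
    (hdim : (Module.finrank ℝ E : ℝ) = 2 * lam + 2) (hη : ‖η‖ = 1) (n : ℕ) :
    n * zonalIntegral η (X ^ (n - 1)) = (n + (2 * lam + 1)) * zonalIntegral η (X ^ (n + 1)) := by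
  have hpos : 0 < 2 * lam + 2 := hdim ▸ by exact_mod_cast Module.finrank_pos
  have hparts := two_mul_integral_inner_pow_succ_mul_gaussian hη n
  rw [integral_inner_pow_mul_gaussian hη, integral_inner_pow_mul_gaussian hη, hdim] at hparts
  rcases n with _ | n
  · have hGamma : Real.Gamma ((((0 + 1 : ℕ) : ℝ) + (2 * lam + 2)) / 2) ≠ 0 :=
      (Real.Gamma_pos_of_pos (by push_cast; linarith)).ne'
    simp_all
  · have harg : 0 < ((n : ℝ) + (2 * lam + 2)) / 2 := by positivity
    have hshift : (((n + 1 + 1 : ℕ) : ℝ) + (2 * lam + 2)) / 2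
        = ((n : ℝ) + (2 * lam + 2)) / 2 + 1 := by push_cast; ring
    rw [Nat.add_sub_cancel, hshift, Real.Gamma_add_one harg.ne'] at hparts
    refine mul_left_cancel₀ (Real.Gamma_pos_of_pos harg).ne' ?_
    rw [Nat.add_sub_cancel]
    push_cast at hparts ⊢
    linear_combination -2 * hparts

lemma isGegenbauerFunctional_zonalIntegral [Nontrivial E]
    (hdim : (Module.finrank ℝ E : ℝ) = 2 * lam + 2) (hη : ‖η‖ = 1) :
    IsGegenbauerFunctional lam (zonalIntegral η) := by
  intro p
  induction p using Polynomial.induction_on' with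
  | add p q hp hq => simp only [map_add, mul_add, hp, hq]
  | monomial n a =>
    have hleft : (1 - X ^ 2) * derivative (monomial n a)
        = C (a * n) * X ^ (n - 1) - C (a * n) * X ^ (n + 1) := by
      rcases n with _ | n
      · simp
      · rw [derivative_monomial, ← C_mul_X_pow_eq_monomial, Nat.add_sub_cancel]
        ring
    have hright : X * monomial n a = C a * X ^ (n + 1) := by
      rw [← C_mul_X_pow_eq_monomial]; ring
    rw [hleft, hright, map_sub, map_C_mul, map_C_mul, map_C_mul]
    linear_combination a * natCast_mul_zonalIntegral_X_pow hdim hη n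

lemma hasSum_integral_sphere_exp_inner (hη : ‖η‖ = 1) (z : ℝ) :
    HasSum (fun n : ℕ ↦ (Complex.I * z) ^ n / n.factorial * (zonalIntegral η (X ^ n) : ℂ))
      (∫ ω : Metric.sphere (0 : E) 1, Complex.exp (Complex.I * z * inner ℝ η (ω : E))
        ∂volume.toSphere) := by
  set F : ℕ → Metric.sphere (0 : E) 1 → ℂ := fun n ω ↦
    (Complex.I * z * inner ℝ η (ω : E)) ^ n / n.factorial
  have hterm (n : ℕ) : ∫ ω, F n ω ∂volume.toSphere
      = (Complex.I * z) ^ n / n.factorial * (zonalIntegral η (X ^ n) : ℂ) := by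
    rw [zonalIntegral_apply, ← integral_complex_ofReal, ← integral_const_mul]
    refine integral_congr_ae (.of_forall fun ω ↦ ?_)
    simp only [F, eval_pow, eval_X]
    push_cast
    ring
  have hbound (n : ℕ) (ω : Metric.sphere (0 : E) 1) : ‖F n ω‖ ≤ |z| ^ n / n.factorial := by
    rw [norm_div, norm_pow, norm_mul, norm_mul, Complex.norm_I, one_mul, Complex.norm_real,
      Complex.norm_real, Complex.norm_natCast, Real.norm_eq_abs, Real.norm_eq_abs]
    gcongr
    exact mul_le_of_le_one_right (abs_nonneg _) (abs_inner_le_one_of_mem_sphere hη ω)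
  simp only [← hterm]
  refine hasSum_integral_of_dominated_convergence (fun n _ ↦ |z| ^ n / n.factorial)
    (fun n ↦ by fun_prop) (fun n ↦ .of_forall (hbound n))
    (.of_forall fun _ ↦ Real.summable_pow_div_factorial |z|) (integrable_const _)
    (.of_forall fun ω ↦ ?_)
  rw [Complex.exp_eq_exp_ℂ]
  exact NormedSpace.expSeries_div_hasSum_exp _

lemma integral_sphere_exp_inner [Nontrivial E] (hlam : 0 ≤ lam)
    (hdim : (Module.finrank ℝ E : ℝ) = 2 * lam + 2) (hη : ‖η‖ = 1) (z : ℝ) :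
    ∫ ω : Metric.sphere (0 : E) 1, Complex.exp (Complex.I * z * inner ℝ η (ω : E))
        ∂volume.toSphere
      = (volume : Measure E).toSphere.real Set.univ
        • ((2 ^ lam * Real.Gamma (lam + 1) * besselJt lam z : ℝ) : ℂ) := by
  have hzonal := isGegenbauerFunctional_zonalIntegral hdim hη
  have hmoments := hasSum_integral_sphere_exp_inner (E := E) hη z
  rw [← (mul_right_injective₀ (two_ne_zero (α := ℕ))).hasSum_iff] at hmoments
  · have hseries := Complex.hasSum_ofReal.2 ((hasSum_besselJt hlam z).mul_left
      ((volume : Measure E).toSphere.real Set.univ * (2 ^ lam * Real.Gamma (lam + 1))))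
    rw [Complex.real_smul, ← Complex.ofReal_mul, ← mul_assoc]
    refine hmoments.unique (hseries.congr_fun fun j ↦ ?_)
    have hGamma := (Real.Gamma_pos_of_pos (by positivity : 0 < (j : ℝ) + lam + 1)).ne'
    have hreal : z ^ (2 * j) / (2 * j).factorial * ((-1) ^ j * zonalIntegral η (X ^ (2 * j)))
        = (volume : Measure E).toSphere.real Set.univ * (2 ^ lam * Real.Gamma (lam + 1))
          * (besselCoeff lam j * z ^ (2 * j)) := by
      rw [hzonal.map_X_pow_even hlam, zonalIntegral_one, besselCoeff, pow_mul 2,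
        show (2 : ℝ) ^ 2 = 4 by norm_num]
      field_simp
    rw [Function.comp_apply, ← hreal, mul_pow, pow_mul Complex.I, Complex.I_sq]
    push_cast
    ring
  · intro n hn
    obtain ⟨j, rfl⟩ : Odd n := by
      rw [← Nat.not_even_iff_odd, even_iff_exists_two_mul]
      exact fun ⟨j, hj⟩ ↦ hn ⟨j, hj.symm⟩
    rw [hzonal.map_X_pow_odd hlam, Complex.ofReal_zero, mul_zero]

end Sphere

/-! ### Series of zonal functions -/

section ZonalKernel

open Polynomial

/-- The kernel `Σ_k a_k z^{-λ} J_{k+λ}(z) P_k(w)`, where `z = |x||y|` and `w` is the cosine of the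
angle between `x` and `y`. -/
def zonalKernel (a : ℕ → ℂ) (lam : ℝ) (P : ℕ → ℝ[X]) (w z : ℝ) : ℂ :=
  ∑' k, a k * ((besselMode lam k z * (P k).eval w : ℝ) : ℂ)

/-- The values on `[-1, 1]` of the polynomials `P_k` grow at most polynomially in `k`. -/
def HasPolynomialGrowth (P : ℕ → ℝ[X]) : Prop :=
  ∃ (D : ℝ) (N : ℕ), ∀ (k : ℕ) (w : ℝ), |w| ≤ 1 → |(P k).eval w| ≤ D * ((k : ℝ) + 1) ^ N

lemma hasPolynomialGrowth_gegPoly {mu : ℝ} (hmu : 0 ≤ mu) : HasPolynomialGrowth (gegPoly mu) := by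
  obtain ⟨N, hN⟩ := exists_nat_ge (2 * mu)
  refine ⟨N + 1, N + 1, fun k w hw ↦ ?_⟩
  rw [eval_gegPoly]
  exact abs_geg_le hmu hN hw k

lemma hasPolynomialGrowth_gegTPoly {lam : ℝ} (hlam : 0 ≤ lam) :
    HasPolynomialGrowth (gegTPoly lam) := by
  obtain ⟨N, hN⟩ := exists_nat_ge (2 * (lam + 1))
  refine ⟨2 * (N + 1), N + 1, fun k w hw ↦ ?_⟩
  rw [eval_gegTPoly]
  exact abs_gegT_le hlam hN hw k

lemma AfunR_eq_zonalKernel (u : ℂ) (lam w z : ℝ) :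
    AfunR u lam w z = ((2 ^ (lam - 1) * Real.Gamma (lam + 1) : ℝ) : ℂ)
      * zonalKernel (fun k ↦ u + (-1) ^ k) lam (gegPoly lam) w z := by
  simp only [AfunR, zonalKernel, besselMode, eval_gegPoly]

lemma BfunR_eq_zonalKernel (u : ℂ) (lam w z : ℝ) :
    BfunR u lam w z = -((2 ^ (lam - 1) * Real.Gamma (lam + 1) : ℝ) : ℂ)
      * zonalKernel (fun k ↦ u - (-1) ^ k) lam (gegTPoly lam) w z := by
  simp only [BfunR, zonalKernel, besselMode, eval_gegTPoly]

lemma CfunR_eq_zonalKernel (u : ℂ) (lam w z : ℝ) :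
    CfunR u lam w z = -((2 ^ lam * Real.Gamma (lam + 1) : ℝ) : ℂ)
      * zonalKernel (fun k ↦ u - (-1) ^ k) (lam + 1) (gegPoly (lam + 1)) w z := by
  rw [CfunR, zonalKernel, ← (add_left_injective 1).tsum_eq]
  · congr 1
    refine tsum_congr fun k ↦ ?_
    rw [besselMode, eval_gegPoly, if_pos (Nat.le_add_left 1 k), Nat.add_sub_cancel]
    push_cast
    ring_nf
  · intro k hk
    rcases k with _ | k
    · simp at hk
    · exact ⟨k, rfl⟩

variable {a : ℕ → ℂ} {M lam : ℝ} {P : ℕ → ℝ[X]}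

lemma exists_norm_zonalKernel_term_le (ha : ∀ k, ‖a k‖ ≤ M) (hlam : 0 ≤ lam)
    (hP : HasPolynomialGrowth P) :
    ∃ (B : ℝ) (Q : ℕ), 0 ≤ B ∧ ∀ (k : ℕ) (w z : ℝ), |w| ≤ 1 → 0 ≤ z →
      ‖a k * ((besselMode lam k z * (P k).eval w : ℝ) : ℂ)‖
        ≤ B * (1 + z) ^ Q * (1 / ((k : ℝ) + 1) ^ 2) := by
  obtain ⟨D, N, hD⟩ := hP
  obtain ⟨B, hB, hmode⟩ := exists_pow_mul_abs_besselMode_le hlam (N + 2)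
  have hM : 0 ≤ M := (norm_nonneg _).trans (ha 0)
  have hD_nonneg : 0 ≤ D := by simpa using (abs_nonneg _).trans (hD 0 0 (by simp))
  refine ⟨M * (D * B), N + 2, by positivity, fun k w z hw hz ↦ ?_⟩
  rw [norm_mul, Complex.norm_real, Real.norm_eq_abs, abs_mul, mul_one_div,
    le_div_iff₀ (by positivity)]
  calc ‖a k‖ * (|besselMode lam k z| * |(P k).eval w|) * ((k : ℝ) + 1) ^ 2
      ≤ M * (|besselMode lam k z| * (D * ((k : ℝ) + 1) ^ N)) * ((k : ℝ) + 1) ^ 2 := by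
        gcongr
        · exact ha k
        · exact hD k w hw
    _ = M * (D * (((k : ℝ) + 1) ^ (N + 2) * |besselMode lam k z|)) := by ring
    _ ≤ M * (D * (B * (1 + z) ^ (N + 2))) :=
        mul_le_mul_of_nonneg_left (mul_le_mul_of_nonneg_left (hmode k z hz) hD_nonneg) hM
    _ = M * (D * B) * (1 + z) ^ (N + 2) := by ring

lemma summable_one_div_natCast_add_one_sq : Summable fun k : ℕ ↦ 1 / ((k : ℝ) + 1) ^ 2 := by
  simpa using (summable_nat_add_iff 1).2 (Real.summable_one_div_nat_pow.2 one_lt_two)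

lemma hasSum_zonalKernel (ha : ∀ k, ‖a k‖ ≤ M) (hlam : 0 ≤ lam) (hP : HasPolynomialGrowth P)
    {w z : ℝ} (hw : |w| ≤ 1) (hz : 0 ≤ z) :
    HasSum (fun k ↦ a k * ((besselMode lam k z * (P k).eval w : ℝ) : ℂ))
      (zonalKernel a lam P w z) := by
  obtain ⟨B, Q, -, hbound⟩ := exists_norm_zonalKernel_term_le ha hlam hP
  exact (Summable.of_norm_bounded (summable_one_div_natCast_add_one_sq.mul_left _)
    fun k ↦ hbound k w z hw hz).hasSum

lemma exists_norm_zonalKernel_le (ha : ∀ k, ‖a k‖ ≤ M) (hlam : 0 ≤ lam)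
    (hP : HasPolynomialGrowth P) :
    ∃ (B : ℝ) (Q : ℕ), 0 ≤ B ∧ ∀ w z : ℝ, |w| ≤ 1 → 0 ≤ z →
      ‖zonalKernel a lam P w z‖ ≤ B * (1 + z) ^ Q := by
  obtain ⟨B, Q, hB, hbound⟩ := exists_norm_zonalKernel_term_le ha hlam hP
  set S := ∑' k : ℕ, 1 / ((k : ℝ) + 1) ^ 2
  refine ⟨B * S, Q, by positivity, fun w z hw hz ↦ ?_⟩
  rw [mul_right_comm]
  exact tsum_of_norm_bounded (summable_one_div_natCast_add_one_sq.hasSum.mul_left _)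
    fun k ↦ hbound k w z hw hz

variable {E : Type*} [NormedAddCommGroup E] [InnerProductSpace ℝ E]
  [MeasurableSpace E] [BorelSpace E]

lemma stronglyMeasurable_zonalKernel [SecondCountableTopology E] (ha : ∀ k, ‖a k‖ ≤ M)
    (hlam : 0 ≤ lam) (hP : HasPolynomialGrowth P) (y : E) :
    StronglyMeasurable fun x : E ↦
      zonalKernel a lam P (inner ℝ x y / (‖x‖ * ‖y‖)) (‖x‖ * ‖y‖) := by
  have hterm (k : ℕ) : Measurable fun x : E ↦ a k * ((besselMode lam k (‖x‖ * ‖y‖)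
      * (P k).eval (inner ℝ x y / (‖x‖ * ‖y‖)) : ℝ) : ℂ) := by
    have := (continuous_besselMode hlam k).measurable
    have := (P k).continuous.measurable
    fun_prop
  refine (measurable_of_tendsto_metrizable (fun n ↦ Finset.measurable_fun_sum (Finset.range n)
    fun k _ ↦ hterm k) (tendsto_pi_nhds.2 fun x ↦ ?_)).stronglyMeasurable
  exact (hasSum_zonalKernel ha hlam hP (abs_real_inner_div_norm_mul_norm_le_one x y)
    (by positivity)).tendsto_sum_nat

lemma integral_sphere_zonalKernel [FiniteDimensional ℝ E] (ha : ∀ k, ‖a k‖ ≤ M) (hlam : 0 ≤ lam)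
    (hP : HasPolynomialGrowth P) {η : E} (hη : ‖η‖ = 1) (hP_zero : P 0 = 1)
    (hP_mean : ∀ k ≠ 0, zonalIntegral η (P k) = 0) {z : ℝ} (hz : 0 ≤ z) :
    ∫ ω : Metric.sphere (0 : E) 1, zonalKernel a lam P (inner ℝ η (ω : E)) z ∂volume.toSphere
      = (volume : Measure E).toSphere.real Set.univ • (a 0 * (besselJt lam z : ℂ)) := by
  obtain ⟨B, Q, -, hbound⟩ := exists_norm_zonalKernel_term_le ha hlam hP
  have hsum := hasSum_integral_of_dominated_convergence (μ := (volume : Measure E).toSphere)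
    (F := fun k ω ↦ a k * ((besselMode lam k z * (P k).eval (inner ℝ η (ω : E)) : ℝ) : ℂ))
    (fun k _ ↦ B * (1 + z) ^ Q * (1 / ((k : ℝ) + 1) ^ 2))
    (fun k ↦ by have := (P k).continuous; fun_prop)
    (fun k ↦ .of_forall fun ω ↦ hbound k _ z (abs_inner_le_one_of_mem_sphere hη ω) hz)
    (.of_forall fun _ ↦ summable_one_div_natCast_add_one_sq.mul_left _) (integrable_const _)
    (.of_forall fun ω ↦ hasSum_zonalKernel ha hlam hP (abs_inner_le_one_of_mem_sphere hη ω) hz)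
  have hterm (k : ℕ) : ∫ ω : Metric.sphere (0 : E) 1, a k
      * ((besselMode lam k z * (P k).eval (inner ℝ η (ω : E)) : ℝ) : ℂ) ∂volume.toSphere
        = a k * ((besselMode lam k z * zonalIntegral η (P k) : ℝ) : ℂ) := by
    rw [integral_const_mul, integral_complex_ofReal, integral_const_mul, zonalIntegral_apply]
  simp only [hterm] at hsum
  rw [← hsum.tsum_eq, tsum_eq_single 0 fun k hk ↦ by rw [hP_mean k hk]; simp, hP_zero,
    zonalIntegral_one, besselMode_zero, Complex.real_smul]
  push_cast
  ring

end ZonalKernel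

/-! ### Integrals of radial functions against the kernels -/

section RadialIntegral

open Polynomial

variable {E : Type*} [NormedAddCommGroup E]

/-- All absolute moments of `F` are finite; the class of functions for which the Clifford–Fourier
integral is seen to converge, since its kernel grows polynomially. -/
def HasIntegrableMoments [MeasureSpace E] (F : E → ℝ) : Prop :=
  ∀ n : ℕ, Integrable fun x ↦ ‖x‖ ^ n * F x

namespace HasIntegrableMoments

lemma integrable_one_add_norm_pow_mul [MeasureSpace E] {F : E → ℝ} (hF : HasIntegrableMoments F)
    (n : ℕ) : Integrable fun x ↦ (1 + ‖x‖) ^ n * F x := by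
  simp only [add_comm (1 : ℝ), add_pow, one_pow, mul_one, Finset.sum_mul]
  refine integrable_finsetSum _ fun k _ ↦ ((hF k).const_mul (n.choose k : ℝ)).congr ?_
  exact .of_forall fun x ↦ by ring

lemma integrable_smul [MeasureSpace E] {V : Type*} [NormedAddCommGroup V] [NormedSpace ℝ V]
    {F : E → ℝ} (hF : HasIntegrableMoments F) {K : E → V}
    (hK : AEStronglyMeasurable K) {C : ℝ} {n : ℕ} (hbound : ∀ x, ‖K x‖ ≤ C * (1 + ‖x‖) ^ n) :
    Integrable fun x ↦ F x • K x := by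
  have hF_meas : AEStronglyMeasurable F := by simpa using (hF 0).aestronglyMeasurable
  refine ((hF.integrable_one_add_norm_pow_mul n).norm.const_mul C).mono' (hF_meas.smul hK)
    (.of_forall fun x ↦ ?_)
  rw [norm_smul, norm_mul, Real.norm_of_nonneg (by positivity : 0 ≤ (1 + ‖x‖) ^ n)]
  calc ‖F x‖ * ‖K x‖ ≤ ‖F x‖ * (C * (1 + ‖x‖) ^ n) := by gcongr; exact hbound x
    _ = C * ((1 + ‖x‖) ^ n * ‖F x‖) := by ring

end HasIntegrableMoments

variable [InnerProductSpace ℝ E] {a : ℕ → ℂ} {M lam : ℝ} {P : ℕ → ℝ[X]}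

lemma exists_norm_zonalKernel_inner_le (ha : ∀ k, ‖a k‖ ≤ M) (hlam : 0 ≤ lam)
    (hP : HasPolynomialGrowth P) (y : E) :
    ∃ (C : ℝ) (Q : ℕ), 0 ≤ C ∧ ∀ x : E,
      ‖zonalKernel a lam P (inner ℝ x y / (‖x‖ * ‖y‖)) (‖x‖ * ‖y‖)‖ ≤ C * (1 + ‖x‖) ^ Q := by
  obtain ⟨B, Q, hB, hbound⟩ := exists_norm_zonalKernel_le ha hlam hP
  refine ⟨B * (1 + ‖y‖) ^ Q, Q, by positivity, fun x ↦ ?_⟩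
  refine (hbound _ _ (abs_real_inner_div_norm_mul_norm_le_one x y) (by positivity)).trans ?_
  rw [mul_assoc, ← mul_pow]
  gcongr
  nlinarith [norm_nonneg x, norm_nonneg y]

variable [FiniteDimensional ℝ E] [MeasurableSpace E] [BorelSpace E]

lemma HasIntegrableMoments.integrable_smul_zonalKernel {F : E → ℝ} (hF : HasIntegrableMoments F)
    (ha : ∀ k, ‖a k‖ ≤ M) (hlam : 0 ≤ lam) (hP : HasPolynomialGrowth P) (y : E) :
    Integrable fun x ↦ F x • zonalKernel a lam P (inner ℝ x y / (‖x‖ * ‖y‖)) (‖x‖ * ‖y‖) := by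
  obtain ⟨C, Q, -, hbound⟩ := exists_norm_zonalKernel_inner_le ha hlam hP y
  exact hF.integrable_smul (stronglyMeasurable_zonalKernel ha hlam hP y).aestronglyMeasurable hbound

variable {f₀ : ℝ → ℝ} {y : E}

lemma integral_radial_smul_zonalKernel (hf : HasIntegrableMoments fun x : E ↦ f₀ ‖x‖)
    (ha : ∀ k, ‖a k‖ ≤ M) (hlam : 0 ≤ lam) (hP : HasPolynomialGrowth P) (hP_zero : P 0 = 1)
    (hP_mean : ∀ η : E, ‖η‖ = 1 → ∀ k ≠ 0, zonalIntegral η (P k) = 0) (hy : y ≠ 0) :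
    ∫ x, f₀ ‖x‖ • zonalKernel a lam P (inner ℝ x y / (‖x‖ * ‖y‖)) (‖x‖ * ‖y‖)
      = ∫ x : E, f₀ ‖x‖ • (a 0 * (besselJt lam (‖x‖ * ‖y‖) : ℂ)) := by
  have : Nontrivial E := nontrivial_of_ne y 0 hy
  have hη : ‖‖y‖⁻¹ • y‖ = 1 := norm_smul_inv_norm (𝕜 := ℝ) hy
  refine integral_radial_smul_eq_of_sphere_mean (g := fun r ↦ a 0 * (besselJt lam (r * ‖y‖) : ℂ))
    (hf.integrable_smul_zonalKernel ha hlam hP y) fun r hr ↦ ?_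
  rw [← integral_sphere_zonalKernel ha hlam hP hη hP_zero (hP_mean _ hη) (by positivity)]
  congr! 2 with ω
  have hnorm : ‖r • (ω : E)‖ = r := by simp [norm_smul, hr.le]
  rw [hnorm, real_inner_smul_left, mul_div_mul_left _ _ hr.ne', real_inner_smul_left,
    real_inner_comm, div_eq_inv_mul]

lemma norm_add_neg_one_pow_le (u : ℂ) (k : ℕ) : ‖u + (-1) ^ k‖ ≤ ‖u‖ + 1 := by
  simpa using norm_add_le u ((-1) ^ k)

lemma norm_sub_neg_one_pow_le (u : ℂ) (k : ℕ) : ‖u - (-1) ^ k‖ ≤ ‖u‖ + 1 := by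
  simpa using norm_sub_le u ((-1) ^ k)

lemma HasIntegrableMoments.integrable_smul_AfunR {F : E → ℝ} (hF : HasIntegrableMoments F)
    (hlam : 0 ≤ lam) (u : ℂ) (y : E) :
    Integrable fun x ↦ F x • AfunR u lam (inner ℝ x y / (‖x‖ * ‖y‖)) (‖x‖ * ‖y‖) := by
  simp only [AfunR_eq_zonalKernel, ← mul_smul_comm]
  exact (hF.integrable_smul_zonalKernel (norm_add_neg_one_pow_le u) hlam
    (hasPolynomialGrowth_gegPoly hlam) y).const_mul _

lemma HasIntegrableMoments.integrable_smul_BfunR {F : E → ℝ} (hF : HasIntegrableMoments F)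
    (hlam : 0 ≤ lam) (u : ℂ) (y : E) :
    Integrable fun x ↦ F x • BfunR u lam (inner ℝ x y / (‖x‖ * ‖y‖)) (‖x‖ * ‖y‖) := by
  simp only [BfunR_eq_zonalKernel, ← mul_smul_comm]
  exact (hF.integrable_smul_zonalKernel (norm_sub_neg_one_pow_le u) hlam
    (hasPolynomialGrowth_gegTPoly hlam) y).const_mul _

lemma integral_radial_smul_AfunR (hf : HasIntegrableMoments fun x : E ↦ f₀ ‖x‖) (hlam : 0 ≤ lam)
    (hdim : (Module.finrank ℝ E : ℝ) = 2 * lam + 2) (u : ℂ) (hy : y ≠ 0) :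
    ∫ x, f₀ ‖x‖ • AfunR u lam (inner ℝ x y / (‖x‖ * ‖y‖)) (‖x‖ * ‖y‖)
      = ((2 ^ (lam - 1) * Real.Gamma (lam + 1) : ℝ) : ℂ) * (u + 1)
        * ∫ x : E, f₀ ‖x‖ • (besselJt lam (‖x‖ * ‖y‖) : ℂ) := by
  have : Nontrivial E := nontrivial_of_ne y 0 hy
  simp only [AfunR_eq_zonalKernel, ← mul_smul_comm]
  rw [integral_const_mul, integral_radial_smul_zonalKernel hf (norm_add_neg_one_pow_le u) hlam
    (hasPolynomialGrowth_gegPoly hlam) (gegPoly_zero lam) (fun η hη k hk ↦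
      (isGegenbauerFunctional_zonalIntegral hdim hη).map_gegPoly_eq_zero hlam k hk) hy]
  simp only [← mul_smul_comm, integral_const_mul, pow_zero, mul_assoc]

lemma integral_radial_smul_BfunR (hf : HasIntegrableMoments fun x : E ↦ f₀ ‖x‖) (hlam : 0 ≤ lam)
    (hdim : (Module.finrank ℝ E : ℝ) = 2 * lam + 2) (u : ℂ) (hy : y ≠ 0) :
    ∫ x, f₀ ‖x‖ • BfunR u lam (inner ℝ x y / (‖x‖ * ‖y‖)) (‖x‖ * ‖y‖)
      = -((2 ^ (lam - 1) * Real.Gamma (lam + 1) : ℝ) : ℂ) * (u - 1)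
        * ∫ x : E, f₀ ‖x‖ • (besselJt lam (‖x‖ * ‖y‖) : ℂ) := by
  have : Nontrivial E := nontrivial_of_ne y 0 hy
  simp only [BfunR_eq_zonalKernel, ← mul_smul_comm]
  rw [integral_const_mul, integral_radial_smul_zonalKernel hf (norm_sub_neg_one_pow_le u) hlam
    (hasPolynomialGrowth_gegTPoly hlam) (gegTPoly_zero lam) (fun η hη k hk ↦
      (isGegenbauerFunctional_zonalIntegral hdim hη).map_gegTPoly_eq_zero hlam k hk) hy]
  simp only [← mul_smul_comm, integral_const_mul, pow_zero, mul_assoc]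

-- The parameter `u` cancels: `2^{λ-1} ((u + 1) - (u - 1)) = 2^λ`.
lemma integral_radial_smul_AfunR_add_BfunR (hf : HasIntegrableMoments fun x : E ↦ f₀ ‖x‖)
    (hlam : 0 ≤ lam) (hdim : (Module.finrank ℝ E : ℝ) = 2 * lam + 2) (u : ℂ) (hy : y ≠ 0) :
    ∫ x, f₀ ‖x‖ • (AfunR u lam (inner ℝ x y / (‖x‖ * ‖y‖)) (‖x‖ * ‖y‖)
        + BfunR u lam (inner ℝ x y / (‖x‖ * ‖y‖)) (‖x‖ * ‖y‖))
      = ((2 ^ lam * Real.Gamma (lam + 1) : ℝ) : ℂ)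
        * ∫ x : E, f₀ ‖x‖ • (besselJt lam (‖x‖ * ‖y‖) : ℂ) := by
  simp only [smul_add]
  rw [integral_add (hf.integrable_smul_AfunR hlam u y) (hf.integrable_smul_BfunR hlam u y),
    integral_radial_smul_AfunR hf hlam hdim u hy, integral_radial_smul_BfunR hf hlam hdim u hy,
    Real.rpow_sub_one two_ne_zero]
  push_cast
  ring

lemma integral_radial_smul_exp_inner (hf : HasIntegrableMoments fun x : E ↦ f₀ ‖x‖)
    (hlam : 0 ≤ lam) (hdim : (Module.finrank ℝ E : ℝ) = 2 * lam + 2) (hy : y ≠ 0) :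
    ∫ x, f₀ ‖x‖ • Complex.exp (-Complex.I * (inner ℝ x y : ℝ))
      = ((2 ^ lam * Real.Gamma (lam + 1) : ℝ) : ℂ)
        * ∫ x : E, f₀ ‖x‖ • (besselJt lam (‖x‖ * ‖y‖) : ℂ) := by
  have : Nontrivial E := nontrivial_of_ne y 0 hy
  have hη : ‖-(‖y‖⁻¹ • y)‖ = 1 := (norm_neg _).trans (norm_smul_inv_norm (𝕜 := ℝ) hy)
  have hint : Integrable fun x : E ↦ f₀ ‖x‖ • Complex.exp (-Complex.I * (inner ℝ x y : ℝ)) :=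
    hf.integrable_smul (C := 1) (n := 0) (by fun_prop) fun x ↦ by simp [Complex.norm_exp]
  rw [integral_radial_smul_eq_of_sphere_mean hint (g := fun r ↦
    ((2 ^ lam * Real.Gamma (lam + 1) * besselJt lam (r * ‖y‖) : ℝ) : ℂ)) fun r hr ↦ ?_]
  · simp only [Complex.ofReal_mul, ← integral_const_mul, ← mul_smul_comm]
  · rw [← integral_sphere_exp_inner hlam hdim hη]
    congr! 3 with ω
    have hinner : inner ℝ (r • (ω : E)) y = -(r * ‖y‖ * inner ℝ (-(‖y‖⁻¹ • y)) (ω : E)) := by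
      have := norm_ne_zero_iff.2 hy
      rw [inner_neg_left, real_inner_smul_left, real_inner_smul_left, real_inner_comm]
      field_simp
    rw [hinner]
    push_cast
    ring

end RadialIntegral

/-! ### The Hankel transform -/

section Hankel

/-- The Hankel transform of order `λ` of the radial profile `f₀`. -/
def hankelTransform (lam : ℝ) (f₀ : ℝ → ℝ) (s : ℝ) : ℝ :=
  ∫ r in Set.Ioi (0 : ℝ), f₀ r * (besselJ lam (r * s) / (r * s) ^ lam) * r ^ (2 * lam + 1)

variable {E : Type*} [NormedAddCommGroup E] [InnerProductSpace ℝ E] [FiniteDimensional ℝ E]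
  [MeasurableSpace E] [BorelSpace E] [Nontrivial E] {lam : ℝ}

lemma integral_radial_smul_besselJt (hdim : (Module.finrank ℝ E : ℝ) = 2 * lam + 2) (f₀ : ℝ → ℝ)
    {s : ℝ} (hs : 0 < s) :
    ∫ x : E, f₀ ‖x‖ • besselJt lam (‖x‖ * s)
      = (volume : Measure E).toSphere.real Set.univ * hankelTransform lam f₀ s := by
  rw [integral_norm_eq_toSphere_smul fun r ↦ f₀ r • besselJt lam (r * s), smul_eq_mul,
    hankelTransform]
  congr 1
  refine setIntegral_congr_fun measurableSet_Ioi fun r (hr : 0 < r) ↦ ?_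
  have hexp : 2 * lam + 1 = ((Module.finrank ℝ E - 1 : ℕ) : ℝ) := by
    rw [Nat.cast_sub Module.finrank_pos, hdim]
    push_cast
    ring
  simp only [besselJ_div_rpow lam (mul_pos hr hs), hexp, Real.rpow_natCast, smul_eq_mul]
  ring

lemma two_rpow_mul_Gamma_mul_integral_radial_smul_besselJt
    (hdim : (Module.finrank ℝ E : ℝ) = 2 * lam + 2) (f₀ : ℝ → ℝ) {s : ℝ} (hs : 0 < s) :
    ((2 ^ lam * Real.Gamma (lam + 1) : ℝ) : ℂ) * ∫ x : E, f₀ ‖x‖ • (besselJt lam (‖x‖ * s) : ℂ)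
      = (((2 * Real.pi) ^ ((Module.finrank ℝ E : ℝ) / 2) * hankelTransform lam f₀ s : ℝ) : ℂ) := by
  have hexp : (Module.finrank ℝ E : ℝ) / 2 = lam + 1 := by
    rw [hdim]
    ring
  have hcast (x : E) : f₀ ‖x‖ • (besselJt lam (‖x‖ * s) : ℂ)
      = ((f₀ ‖x‖ • besselJt lam (‖x‖ * s) : ℝ) : ℂ) := by
    rw [Complex.real_smul, smul_eq_mul, Complex.ofReal_mul]
  simp only [hcast]
  rw [integral_complex_ofReal, ← Complex.ofReal_mul, integral_radial_smul_besselJt hdim f₀ hs,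
    ← mul_assoc, two_rpow_mul_Gamma_mul_toSphere_univ hdim, hexp]

end Hankel

/-! ### The bivector part -/

section Reflection

variable {E : Type*} [NormedAddCommGroup E] [InnerProductSpace ℝ E] {y : E} {lam : ℝ}
  {V : Type*} [NormedAddCommGroup V]

lemma map_reflection_span_singleton [Module ℝ V] {T : E →ₗ[ℝ] V} (hT : T y = 0) (x : E) :
    T ((ℝ ∙ y).reflection x) = -T x := by
  obtain ⟨c, hc⟩ := Submodule.mem_span_singleton.1 ((ℝ ∙ y).starProjection_apply_mem x)
  rw [Submodule.reflection_apply, ← hc, map_sub, map_nsmul, map_smul, hT, smul_zero, smul_zero,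
    zero_sub]

lemma exists_norm_CfunR_le (hlam : 0 ≤ lam) (u : ℂ) (y : E) :
    ∃ (C : ℝ) (Q : ℕ), 0 ≤ C ∧ ∀ x : E,
      ‖CfunR u lam (inner ℝ x y / (‖x‖ * ‖y‖)) (‖x‖ * ‖y‖)‖ ≤ C * (1 + ‖x‖) ^ Q := by
  obtain ⟨C, Q, hC, hbound⟩ := exists_norm_zonalKernel_inner_le (norm_sub_neg_one_pow_le u)
    (by positivity : 0 ≤ lam + 1) (hasPolynomialGrowth_gegPoly (by positivity : 0 ≤ lam + 1)) y
  refine ⟨‖-((2 ^ lam * Real.Gamma (lam + 1) : ℝ) : ℂ)‖ * C, Q, by positivity, fun x ↦ ?_⟩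
  rw [CfunR_eq_zonalKernel, norm_mul, mul_assoc]
  exact mul_le_mul_of_nonneg_left (hbound x) (norm_nonneg _)

variable [NormedSpace ℝ V] [NormedSpace ℂ V] [FiniteDimensional ℝ E] [MeasurableSpace E]
  [BorelSpace E]

-- The reflection in the line `ℝ y` preserves `‖x‖` and `⟨x, y⟩` and changes the sign of `T x`.
lemma integral_smul_map_eq_zero {T : E →ₗ[ℝ] V} (hT : T y = 0) (g : ℝ → ℝ → ℂ) :
    ∫ x, g ‖x‖ (inner ℝ x y) • T x = 0 := by
  set R := (ℝ ∙ y).reflection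
  have hodd (x : E) : g ‖R x‖ (inner ℝ (R x) y) • T (R x) = -(g ‖x‖ (inner ℝ x y) • T x) := by
    have hRy : R y = y :=
      Submodule.reflection_mem_subspace_eq_self (Submodule.mem_span_singleton_self y)
    have hinner : inner ℝ (R x) y = inner ℝ x y := by
      rw [← R.inner_map_map x y, hRy]
    rw [R.norm_map, hinner, map_reflection_span_singleton hT, smul_neg]
  have hR := R.measurePreserving.integral_comp R.toHomeomorph.measurableEmbedding
    fun x ↦ g ‖x‖ (inner ℝ x y) • T x
  simp only [hodd, integral_neg] at hR
  have : IsAddTorsionFree V := .of_isTorsionFree ℝ V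
  exact self_eq_neg.1 hR.symm

lemma HasIntegrableMoments.integrable_smul_CfunR_smul {F : E → ℝ} (hF : HasIntegrableMoments F)
    (hlam : 0 ≤ lam) (u : ℂ) (y : E) (T : E →L[ℝ] V) :
    Integrable fun x ↦
      F x • (CfunR u lam (inner ℝ x y / (‖x‖ * ‖y‖)) (‖x‖ * ‖y‖) • T x) := by
  obtain ⟨C, Q, hC, hbound⟩ := exists_norm_CfunR_le hlam u y
  refine hF.integrable_smul (C := C * ‖T‖) (n := Q + 1) ?_ fun x ↦ ?_
  · simp only [CfunR_eq_zonalKernel]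
    exact ((stronglyMeasurable_zonalKernel (norm_sub_neg_one_pow_le u) (by positivity)
      (hasPolynomialGrowth_gegPoly (by positivity)) y).const_mul _).aestronglyMeasurable.smul
        T.continuous.aestronglyMeasurable
  · calc ‖CfunR u lam (inner ℝ x y / (‖x‖ * ‖y‖)) (‖x‖ * ‖y‖) • T x‖
        ≤ C * (1 + ‖x‖) ^ Q * (‖T‖ * (1 + ‖x‖)) := by
          rw [norm_smul]
          refine mul_le_mul (hbound x) (T.le_opNorm_of_le ?_) (norm_nonneg _) (by positivity)
          linarith
      _ = C * ‖T‖ * (1 + ‖x‖) ^ (Q + 1) := by ring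

end Reflection

/-! ### The Clifford–Fourier kernel -/

section Clifford

instance : NormedSpace ℂ (Cl m) where
  norm_smul_le := norm_smul_le (α := ℂ) (β := Finset (Fin m) → ℂ)

instance : IsScalarTower ℝ ℂ (Cl m) :=
  inferInstanceAs (IsScalarTower ℝ ℂ (Finset (Fin m) → ℂ))

lemma mul_smul_one (a : Cl m) (c : ℝ) : a * (c • (1 : Cl m)) = c • a := by
  funext S
  change ∑ T : Finset (Fin m), (-1 : ℂ) ^ (((T ×ˢ symmDiff T S).filter fun p ↦ p.2 < p.1).card
      + (T ∩ symmDiff T S).card) * a T * (c • if symmDiff T S = ∅ then (1 : ℂ) else 0) = c • a S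
  rw [Finset.sum_eq_single S]
  · simp [mul_comm]
  · intro T _ hT
    have hne : symmDiff T S ≠ ∅ := fun h ↦ hT (symmDiff_eq_bot.1 h)
    simp [hne]
  · simp

lemma ofReal_smul_one (c : ℝ) : (c : ℂ) • (1 : Cl m) = c • (1 : Cl m) :=
  Complex.coe_smul c 1

/-- The linear map `x ↦ x ∧ y`. -/
def wedgeRight (y : EuclideanSpace ℝ (Fin m)) : EuclideanSpace ℝ (Fin m) →L[ℝ] Cl m :=
  LinearMap.toContinuousLinearMap
    { toFun x := wedge m x y
      map_add' x x' := by
        simp only [wedge, ← Finset.sum_add_distrib]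
        refine Finset.sum_congr rfl fun j _ ↦ Finset.sum_congr rfl fun k _ ↦ ?_
        split_ifs
        · rw [← add_smul, ← Complex.ofReal_add]
          congr 2
          simp only [PiLp.add_apply]
          ring
        · rw [add_zero]
      map_smul' c x := by
        simp only [wedge, Finset.smul_sum, RingHom.id_apply]
        refine Finset.sum_congr rfl fun j _ ↦ Finset.sum_congr rfl fun k _ ↦ ?_
        split_ifs
        · rw [← smul_assoc, Complex.real_smul, ← Complex.ofReal_mul]
          congr 2
          simp only [PiLp.smul_apply, smul_eq_mul]
          ring
        · rw [smul_zero] }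

lemma wedgeRight_apply (x y : EuclideanSpace ℝ (Fin m)) : wedgeRight y x = wedge m x y :=
  rfl

lemma wedgeRight_self (y : EuclideanSpace ℝ (Fin m)) : wedgeRight y y = 0 := by
  simp [wedgeRight_apply, wedge, mul_comm]

lemma ip_ofLp (x y : EuclideanSpace ℝ (Fin m)) : ip x.ofLp y.ofLp = inner ℝ x y := by
  simp [ip, PiLp.inner_apply, mul_comm]

lemma nrm_ofLp (x : EuclideanSpace ℝ (Fin m)) : nrm x.ofLp = ‖x‖ := by
  rw [nrm, ip_ofLp, norm_eq_sqrt_real_inner]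

lemma integral_eq_integral_ofLp {V : Type*} [NormedAddCommGroup V] [NormedSpace ℝ V]
    (g : (Fin m → ℝ) → V) : ∫ x, g x = ∫ x : EuclideanSpace ℝ (Fin m), g x.ofLp :=
  ((PiLp.volume_preserving_ofLp (Fin m)).integral_comp
    (MeasurableEquiv.toLp 2 (Fin m → ℝ)).symm.measurableEmbedding g).symm

lemma HasIntegrableMoments.comp_ofLp {f : (Fin m → ℝ) → ℝ} (hf : HasIntegrableMoments f) :
    HasIntegrableMoments fun x : EuclideanSpace ℝ (Fin m) ↦ f x.ofLp := by
  set L : (Fin m → ℝ) →L[ℝ] EuclideanSpace ℝ (Fin m) :=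
    (EuclideanSpace.equiv (Fin m) ℝ).symm.toContinuousLinearMap
  have hcomp (n : ℕ) : Integrable fun x : EuclideanSpace ℝ (Fin m) ↦ ‖x.ofLp‖ ^ n * f x.ofLp :=
    ((PiLp.volume_preserving_ofLp (Fin m)).integrable_comp_emb
      (MeasurableEquiv.toLp 2 (Fin m → ℝ)).symm.measurableEmbedding).2 (hf n)
  have hmeas : AEStronglyMeasurable fun x : EuclideanSpace ℝ (Fin m) ↦ f x.ofLp := by
    simpa using (hcomp 0).aestronglyMeasurable
  refine fun n ↦ ((hcomp n).norm.const_mul (‖L‖ ^ n)).mono' (.mul (by fun_prop) hmeas)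
    (.of_forall fun x ↦ ?_)
  have hnorm : ‖x‖ ≤ ‖L‖ * ‖x.ofLp‖ := L.le_opNorm x.ofLp
  calc ‖‖x‖ ^ n * f x.ofLp‖ = ‖x‖ ^ n * ‖f x.ofLp‖ := by simp
    _ ≤ (‖L‖ * ‖x.ofLp‖) ^ n * ‖f x.ofLp‖ := by gcongr
    _ = ‖L‖ ^ n * ‖‖x.ofLp‖ ^ n * f x.ofLp‖ := by simp [mul_pow, mul_assoc]

lemma hasIntegrableMoments_schwartzMap {E : Type*} [NormedAddCommGroup E] [NormedSpace ℝ E]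
    [MeasureSpace E] [BorelSpace E] [SecondCountableTopology E]
    [(volume : Measure E).HasTemperateGrowth] (f : SchwartzMap E ℝ) : HasIntegrableMoments f :=
  fun n ↦ (f.integrable_pow_mul volume n).mono
    ((by fun_prop : Continuous fun x ↦ ‖x‖ ^ n * f x).aestronglyMeasurable)
    (.of_forall fun x ↦ by simp)

variable {f₀ : ℝ → ℝ} {y : EuclideanSpace ℝ (Fin m)}

lemma sub_two_div_two_nonneg (hm : 2 ≤ m) : 0 ≤ ((m : ℝ) - 2) / 2 := by
  have : (2 : ℝ) ≤ m := by exact_mod_cast hm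
  linarith

lemma finrank_euclideanSpace_eq :
    (Module.finrank ℝ (EuclideanSpace ℝ (Fin m)) : ℝ) = 2 * ((m - 2) / 2) + 2 := by
  rw [finrank_euclideanSpace_fin]
  ring

lemma smul_Kminus (c : ℝ) (x y : EuclideanSpace ℝ (Fin m)) :
    c • Kminus m x y
      = (c • (AfunR (Complex.I ^ m) ((m - 2) / 2) (inner ℝ x y / (‖x‖ * ‖y‖)) (‖x‖ * ‖y‖)
          + BfunR (Complex.I ^ m) ((m - 2) / 2) (inner ℝ x y / (‖x‖ * ‖y‖)) (‖x‖ * ‖y‖)))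
            • (1 : Cl m)
        + c • (CfunR (Complex.I ^ m) ((m - 2) / 2) (inner ℝ x y / (‖x‖ * ‖y‖)) (‖x‖ * ‖y‖)
            • wedgeRight y x) := by
  rw [Kminus, ip_ofLp, nrm_ofLp, nrm_ofLp, smul_add, smul_assoc, wedgeRight_apply]

lemma integral_radial_smul_Kminus (hm : 2 ≤ m)
    (hf : HasIntegrableMoments fun x : EuclideanSpace ℝ (Fin m) ↦ f₀ ‖x‖) (hy : y ≠ 0) :
    ∫ x : EuclideanSpace ℝ (Fin m), f₀ ‖x‖ • Kminus m x y
      = ((2 * Real.pi) ^ ((m : ℝ) / 2) * hankelTransform ((m - 2) / 2) f₀ ‖y‖) • (1 : Cl m) := by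
  have : Nontrivial (EuclideanSpace ℝ (Fin m)) := nontrivial_of_ne y 0 hy
  have hlam : 0 ≤ ((m : ℝ) - 2) / 2 := sub_two_div_two_nonneg hm
  have hscalar := (((hf.integrable_smul_AfunR hlam (Complex.I ^ m) y).add
    (hf.integrable_smul_BfunR hlam (Complex.I ^ m) y)).smul_const (1 : Cl m))
  simp only [Pi.add_apply, ← smul_add] at hscalar
  have hbivector : ∫ x, f₀ ‖x‖ • (CfunR (Complex.I ^ m) ((m - 2) / 2)
      (inner ℝ x y / (‖x‖ * ‖y‖)) (‖x‖ * ‖y‖) • wedgeRight y x) = 0 := by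
    simp only [← smul_assoc]
    exact integral_smul_map_eq_zero (T := (wedgeRight y).toLinearMap) (wedgeRight_self y)
      fun r s ↦ f₀ r • CfunR (Complex.I ^ m) ((m - 2) / 2) (s / (r * ‖y‖)) (r * ‖y‖)
  simp only [smul_Kminus]
  rw [integral_add hscalar (hf.integrable_smul_CfunR_smul hlam _ y (wedgeRight y)), hbivector,
    add_zero, integral_smul_const,
    integral_radial_smul_AfunR_add_BfunR hf hlam finrank_euclideanSpace_eq _ hy,
    two_rpow_mul_Gamma_mul_integral_radial_smul_besselJt finrank_euclideanSpace_eq f₀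
      (norm_pos_iff.2 hy), finrank_euclideanSpace_fin, ofReal_smul_one]

variable {f : (Fin m → ℝ) → ℝ}

lemma HasIntegrableMoments.comp_norm (hf : HasIntegrableMoments f) (hrad : ∀ x, f x = f₀ (nrm x)) :
    HasIntegrableMoments fun x : EuclideanSpace ℝ (Fin m) ↦ f₀ ‖x‖ := by
  simpa only [hrad, nrm_ofLp] using hf.comp_ofLp

lemma integral_Kminus_mul_radial (hm : 2 ≤ m) (hf : HasIntegrableMoments f)
    (hrad : ∀ x, f x = f₀ (nrm x)) {y : Fin m → ℝ} (hy : y ≠ 0) :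
    ∫ x, Kminus m x y * (f x • (1 : Cl m))
      = ((2 * Real.pi) ^ ((m : ℝ) / 2) * hankelTransform ((m - 2) / 2) f₀ (nrm y))
        • (1 : Cl m) := by
  obtain ⟨y, rfl⟩ := WithLp.ofLp_surjective 2 y
  simp only [mul_smul_one, hrad]
  rw [integral_eq_integral_ofLp, nrm_ofLp]
  simp only [nrm_ofLp]
  exact integral_radial_smul_Kminus hm (hf.comp_norm hrad) (by simpa using hy)

lemma integral_exp_mul_radial (hm : 2 ≤ m) (hf : HasIntegrableMoments f)
    (hrad : ∀ x, f x = f₀ (nrm x)) {y : Fin m → ℝ} (hy : y ≠ 0) :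
    ∫ x, Complex.exp (-Complex.I * ip x y) * (f x : ℂ)
      = (((2 * Real.pi) ^ ((m : ℝ) / 2) * hankelTransform ((m - 2) / 2) f₀ (nrm y) : ℝ) : ℂ) := by
  obtain ⟨y, rfl⟩ := WithLp.ofLp_surjective 2 y
  have hy' : y ≠ 0 := by simpa using hy
  have : Nontrivial (EuclideanSpace ℝ (Fin m)) := nontrivial_of_ne y 0 hy'
  rw [integral_eq_integral_ofLp, nrm_ofLp]
  simp only [hrad, nrm_ofLp, ip_ofLp, mul_comm (Complex.exp _), ← Complex.real_smul]
  rw [integral_radial_smul_exp_inner (hf.comp_norm hrad) (sub_two_div_two_nonneg hm)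
      finrank_euclideanSpace_eq hy', two_rpow_mul_Gamma_mul_integral_radial_smul_besselJt
      finrank_euclideanSpace_eq f₀ (norm_pos_iff.2 hy'), finrank_euclideanSpace_fin]

end Clifford

theorem clifford_fourier_radial_general (m : ℕ) (hm : 2 ≤ m) (f₀ : ℝ → ℝ) (f : (Fin m → ℝ) → ℝ)
    (hf : HasIntegrableMoments f) (hrad : ∀ x, f x = f₀ (nrm x)) (y : Fin m → ℝ) (hy : y ≠ 0) :
    (2 * Real.pi) ^ (-(m : ℝ) / 2) • ∫ x, Kminus m x y * (f x • (1 : Cl m))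
        = hankelTransform ((m - 2) / 2) f₀ (nrm y) • (1 : Cl m) ∧
      (2 * Real.pi) ^ (-(m : ℝ) / 2) • ∫ x, Kminus m x y * (f x • (1 : Cl m))
        = ((((2 * Real.pi) ^ (-(m : ℝ) / 2) : ℝ) : ℂ)
          * ∫ x, Complex.exp (-Complex.I * ip x y) * (f x : ℂ)) • (1 : Cl m) := by
  have hpi : (2 * Real.pi) ^ (-(m : ℝ) / 2) * (2 * Real.pi) ^ ((m : ℝ) / 2) = 1 := by
    rw [neg_div, ← Real.rpow_add Real.two_pi_pos, neg_add_cancel, Real.rpow_zero]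
  rw [integral_Kminus_mul_radial hm hf hrad hy, integral_exp_mul_radial hm hf hrad hy,
    ← Complex.ofReal_mul, ofReal_smul_one, smul_smul, ← mul_assoc, hpi, one_mul]
  exact ⟨rfl, rfl⟩

/-- For a real-valued radial Schwartz function `f(x) = f₀(|x|)`, the Clifford-Fourier
transform coincides with the Hankel transform of order `λ = (m-2)/2` of the radial
profile, and hence with the classical Fourier transform. -/
theorem clifford_fourier_radial (m : ℕ) (hm : 2 ≤ m)
    (f₀ : ℝ → ℝ) (f : SchwartzMap (Fin m → ℝ) ℝ) (hrad : ∀ x, f x = f₀ (nrm x))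
    (y : Fin m → ℝ) (hy : y ≠ 0) :
    ((2*Real.pi) ^ (-(m:ℝ)/2)) • (∫ x : Fin m → ℝ, Kminus m x y * (f x • (1 : Cl m)))
      = (∫ r in Set.Ioi (0:ℝ), f₀ r *
          (besselJ (((m:ℝ) - 2)/2) (r * nrm y) / (r * nrm y) ^ (((m:ℝ) - 2)/2)) *
            r ^ (2 * (((m:ℝ) - 2)/2) + 1)) • (1 : Cl m) ∧
    ((2*Real.pi) ^ (-(m:ℝ)/2)) • (∫ x : Fin m → ℝ, Kminus m x y * (f x • (1 : Cl m)))
      = ((((2*Real.pi : ℝ) ^ (-(m:ℝ)/2) : ℝ) : ℂ) *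
          ∫ x : Fin m → ℝ, Complex.exp (-Complex.I * ip x y) * (f x : ℂ)) • (1 : Cl m) :=
  clifford_fourier_radial_general m hm f₀ f (hasIntegrableMoments_schwartzMap f) hrad y hy

end CliffordFourier
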